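/- arXiv:1810.10695 — 7 statements merged into one kernel-verified Lean document; each statement's English description precedes it below -/
import Mathlib

section
/- Suppose the set I of eigen-indices contains exactly K indices whose eigenvectors at t=0 are supported on C, each associated with a unique cluster C_j and satisfying (1−ε1)/ν(C_j,0) ≤ ψ(x)² ≤ (1+ε1)/ν(C_j,0) for x∈C_j and ψ(x)² ≤ ε1/ν(C,0) for x∈C∖C_j (0 ≤ ε1 < 1), and |I|−K indices whose eigenvectors are supported on B and satisfy ψ(x)² ≤ (1+ε2)/ν(B,0) for x∈B (ε2 ≥ 0). Suppose further that (#) := d0_low·(1−ε1)/d0_up − (δ/(1−δ))·((|I|−K)/K)·(1+ε2) > 0. Then: (1) for every x∈C and y∈B, S(x,0) − S(y,0) ≥ g0 := (1/(n·d0_low))·(K/δ)·(#) > 0; and (2) sup_{x∈V} S(x,0) ≤ (1/(n·d0_low))·(K/δ)·(1+2ε1). -/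
open Finset

/-!
The cluster containing `x` carries mass at most `(δ n / K) d_up` and at least `(δ n / K) d_low`.
Hence its own eigenvector alone already makes `S(x)` at least `(1 - ε₁) K / (δ n d_up)`, while on
`C` the other `K - 1` cluster eigenvectors only add leakage of order `ε₁ / (δ n d_low)`. On `B` all
cluster eigenvectors vanish and each of the remaining `|I| - K` contributes at most
`(1 + ε₂) / ((1 - δ) n d_low)`. The difference of the two levels is `g₀`. As `g₀ > 0`, the values of
`S` on `B` lie below those on `C`, so the upper bound only has to be checked on `C`.
-/

section DivisionByMass

variable {V 𝕜 : Type*} [Field 𝕜] [LinearOrder 𝕜] [IsStrictOrderedRing 𝕜]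
  {A : Finset V} {d : V → 𝕜} {c m : 𝕜}

theorem div_sum_le_div_card_mul (hA : A.Nonempty) (hc : 0 ≤ c) (hm : 0 < m)
    (hd : ∀ x ∈ A, m ≤ d x) : c / ∑ x ∈ A, d x ≤ c / (#A * m) := by
  have hcard : (0 : 𝕜) < #A := by exact_mod_cast hA.card_pos
  have hsum : #A * m ≤ ∑ x ∈ A, d x := by
    simpa only [nsmul_eq_mul] using card_nsmul_le_sum A d m hd
  exact div_le_div_of_nonneg_left hc (mul_pos hcard hm) hsum

theorem div_card_mul_le_div_sum (hA : A.Nonempty) (hc : 0 ≤ c) (hpos : ∀ x ∈ A, 0 < d x)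
    (hd : ∀ x ∈ A, d x ≤ m) : c / (#A * m) ≤ c / ∑ x ∈ A, d x := by
  have hsum : ∑ x ∈ A, d x ≤ #A * m := by
    simpa only [nsmul_eq_mul] using sum_le_card_nsmul A d m hd
  exact div_le_div_of_nonneg_left hc (sum_pos hpos hA) hsum

end DivisionByMass

/-- The spectral embedding norm `S(x) = ∑_{k ∈ I} ψ_k(x)²`, for an arbitrary family of functions
`ψ` in place of eigenvectors. As in the usual definition, it is not square-rooted. -/
def embeddingNorm {ι V : Type*} (ψ : ι → V → ℝ) (I : Finset ι) (x : V) : ℝ :=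
  ∑ k ∈ I, ψ k x ^ 2

section EmbeddingNorm

variable {ι V : Type*} {ψ : ι → V → ℝ} {I J : Finset ι} {k : ι} {x : V} {a b : ℝ}

theorem sq_le_embeddingNorm (hk : k ∈ I) : ψ k x ^ 2 ≤ embeddingNorm ψ I x :=
  single_le_sum (f := fun l => ψ l x ^ 2) (fun _ _ => sq_nonneg _) hk

theorem embeddingNorm_le_card_mul (hb : ∀ k ∈ I, ψ k x ^ 2 ≤ b) :
    embeddingNorm ψ I x ≤ #I * b := by
  simpa only [embeddingNorm, nsmul_eq_mul] using
    sum_le_card_nsmul I (fun k => ψ k x ^ 2) b hb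

theorem embeddingNorm_eq_of_subset (hJI : J ⊆ I) (h0 : ∀ k ∈ I, k ∉ J → ψ k x = 0) :
    embeddingNorm ψ I x = embeddingNorm ψ J x :=
  (sum_subset hJI fun k hkI hkJ => by rw [h0 k hkI hkJ, zero_pow two_ne_zero]).symm

theorem embeddingNorm_le_card_sub_card_mul (hJI : J ⊆ I) (h0 : ∀ k ∈ J, ψ k x = 0)
    (hb : ∀ k ∈ I, k ∉ J → ψ k x ^ 2 ≤ b) :
    embeddingNorm ψ I x ≤ ((#I : ℝ) - #J) * b := by
  classical
  have hvanish : ∀ k ∈ I, k ∉ I \ J → ψ k x = 0 := by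
    intro k hkI hk
    exact h0 k (by_contra fun hkJ => hk (mem_sdiff.mpr ⟨hkI, hkJ⟩))
  rw [embeddingNorm_eq_of_subset sdiff_subset hvanish, ← cast_card_sdiff hJI]
  exact embeddingNorm_le_card_mul fun k hk => hb k (mem_sdiff.mp hk).1 (mem_sdiff.mp hk).2

theorem embeddingNorm_le_add_card_sub_one_mul (hk : k ∈ I) (ha : ψ k x ^ 2 ≤ a)
    (hb : ∀ l ∈ I, l ≠ k → ψ l x ^ 2 ≤ b) :
    embeddingNorm ψ I x ≤ a + ((#I : ℝ) - 1) * b := by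
  classical
  calc embeddingNorm ψ I x
      = ψ k x ^ 2 + embeddingNorm ψ (I.erase k) x :=
        (add_sum_erase I (fun l => ψ l x ^ 2) hk).symm
    _ ≤ a + #(I.erase k) * b :=
        add_le_add ha <| embeddingNorm_le_card_mul fun l hl =>
          hb l (mem_of_mem_erase hl) (ne_of_mem_erase hl)
    _ = a + ((#I : ℝ) - 1) * b := by rw [cast_card_erase_of_mem hk]

end EmbeddingNorm

section WeightedBounds

variable {ι V : Type*} {ψ : ι → V → ℝ} {I J : Finset ι} {k : ι} {x : V} {A C : Finset V}
  {d : V → ℝ} {m a b : ℝ}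

theorem div_card_mul_le_embeddingNorm (hk : k ∈ I) (hx : x ∈ A) (ha : 0 ≤ a)
    (hpos : ∀ y ∈ A, 0 < d y) (hd : ∀ y ∈ A, d y ≤ m) (hψ : a / ∑ y ∈ A, d y ≤ ψ k x ^ 2) :
    a / (#A * m) ≤ embeddingNorm ψ I x :=
  calc a / (#A * m)
      ≤ a / ∑ y ∈ A, d y := div_card_mul_le_div_sum ⟨x, hx⟩ ha hpos hd
    _ ≤ ψ k x ^ 2 := hψ
    _ ≤ embeddingNorm ψ I x := sq_le_embeddingNorm hk

theorem embeddingNorm_le_card_sub_card_mul_div (hJI : J ⊆ I) (hx : x ∈ A) (ha : 0 ≤ a)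
    (hm : 0 < m) (hd : ∀ y ∈ A, m ≤ d y) (h0 : ∀ k ∈ J, ψ k x = 0)
    (hψ : ∀ k ∈ I, k ∉ J → ψ k x ^ 2 ≤ a / ∑ y ∈ A, d y) :
    embeddingNorm ψ I x ≤ ((#I : ℝ) - #J) * (a / (#A * m)) :=
  embeddingNorm_le_card_sub_card_mul hJI h0 fun k hkI hkJ =>
    (hψ k hkI hkJ).trans (div_sum_le_div_card_mul ⟨x, hx⟩ ha hm hd)

theorem embeddingNorm_le_div_add_card_sub_one_mul_div (hJI : J ⊆ I) (hk : k ∈ J)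
    (hxA : x ∈ A) (hxC : x ∈ C) (ha : 0 ≤ a) (hb : 0 ≤ b) (hm : 0 < m) (hd : ∀ y, m ≤ d y)
    (h0 : ∀ l ∈ I, l ∉ J → ψ l x = 0) (hψ : ψ k x ^ 2 ≤ a / ∑ y ∈ A, d y)
    (hψ' : ∀ l ∈ J, l ≠ k → ψ l x ^ 2 ≤ b / ∑ y ∈ C, d y) :
    embeddingNorm ψ I x ≤ a / (#A * m) + ((#J : ℝ) - 1) * (b / (#C * m)) := by
  rw [embeddingNorm_eq_of_subset hJI h0]
  exact embeddingNorm_le_add_card_sub_one_mul hk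
    (hψ.trans (div_sum_le_div_card_mul ⟨x, hxA⟩ ha hm fun y _ => hd y))
    fun l hl hlk => (hψ' l hl hlk).trans
      (div_sum_le_div_card_mul ⟨x, hxC⟩ hb hm fun y _ => hd y)

end WeightedBounds

/-- The quantity `(#)` of Assumption A2, for `K` clusters occupying the fraction `δ` of the vertices
and `M = |I|` functions in total. It measures the gap `g₀` in units of `K / (δ n d_low)`. -/
noncomputable def separationMargin (dlow dup δ ε₁ ε₂ K M : ℝ) : ℝ :=
  dlow * (1 - ε₁) / dup - (δ / (1 - δ)) * ((M - K) / K) * (1 + ε₂)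

section Levels

variable {n dlow dup δ ε₁ ε₂ K M : ℝ}

theorem mul_separationMargin_eq_sub (hlow : dlow ≠ 0) (hK : K ≠ 0) (hδ : δ ≠ 0) :
    1 / (n * dlow) * (K / δ) * separationMargin dlow dup δ ε₁ ε₂ K M =
      (1 - ε₁) / (δ * n / K * dup) - (M - K) * ((1 + ε₂) / ((1 - δ) * n * dlow)) := by
  rw [separationMargin]
  field_simp

theorem div_add_sub_one_mul_div_le (hC : 0 < δ * n) (hlow : 0 < dlow) (hK : K ≠ 0)
    (hε₁ : 0 ≤ ε₁) :
    (1 + ε₁) / (δ * n / K * dlow) + (K - 1) * (ε₁ / (δ * n * dlow)) ≤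
      1 / (n * dlow) * (K / δ) * (1 + 2 * ε₁) := by
  have hleak : 0 ≤ ε₁ / (δ * n * dlow) := by positivity
  calc (1 + ε₁) / (δ * n / K * dlow) + (K - 1) * (ε₁ / (δ * n * dlow))
      ≤ (1 + ε₁) / (δ * n / K * dlow) + K * (ε₁ / (δ * n * dlow)) := by linarith
    _ = 1 / (n * dlow) * (K / δ) * (1 + 2 * ε₁) := by field_simp; ring

end Levels

section Separation

variable {ι V : Type*} {ψ : ι → V → ℝ} {I J : Finset ι} {k : ι} {x y : V} {A B C : Finset V}
  {d : V → ℝ} {n dlow dup δ ε₁ ε₂ : ℝ} {K : ℕ}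

theorem mul_separationMargin_le_embeddingNorm_sub (hJI : J ⊆ I) (hJ : #J = K)
    (hA : (#A : ℝ) = δ * n / K) (hB : (#B : ℝ) = (1 - δ) * n) (hpos : 0 < dlow)
    (hdlow : ∀ z, dlow ≤ d z) (hdup : ∀ z, d z ≤ dup) (hε₁ : ε₁ ≤ 1) (hε₂ : 0 ≤ 1 + ε₂)
    (hk : k ∈ I) (hx : x ∈ A) (hψx : (1 - ε₁) / ∑ z ∈ A, d z ≤ ψ k x ^ 2)
    (hy : y ∈ B) (h0 : ∀ l ∈ J, ψ l y = 0)
    (hψy : ∀ l ∈ I, l ∉ J → ψ l y ^ 2 ≤ (1 + ε₂) / ∑ z ∈ B, d z) :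
    1 / (n * dlow) * (K / δ) * separationMargin dlow dup δ ε₁ ε₂ K #I ≤
      embeddingNorm ψ I x - embeddingNorm ψ I y := by
  have hAne : δ * n / K ≠ 0 := hA ▸ Nat.cast_ne_zero.mpr (card_ne_zero_of_mem hx)
  obtain ⟨hδn, hK⟩ := div_ne_zero_iff.mp hAne
  have hSx : (1 - ε₁) / (δ * n / K * dup) ≤ embeddingNorm ψ I x :=
    hA ▸ div_card_mul_le_embeddingNorm hk hx (sub_nonneg.mpr hε₁)
      (fun z _ => hpos.trans_le (hdlow z)) (fun z _ => hdup z) hψx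
  have hSy : embeddingNorm ψ I y ≤ ((#I : ℝ) - K) * ((1 + ε₂) / ((1 - δ) * n * dlow)) :=
    hJ ▸ hB ▸ embeddingNorm_le_card_sub_card_mul_div hJI hy hε₂ hpos (fun z _ => hdlow z) h0 hψy
  rw [mul_separationMargin_eq_sub hpos.ne' hK (left_ne_zero_of_mul hδn)]
  exact sub_le_sub hSx hSy

theorem embeddingNorm_le_mul_one_add_two_mul (hJI : J ⊆ I) (hJ : #J = K)
    (hA : (#A : ℝ) = δ * n / K) (hC : (#C : ℝ) = δ * n) (hpos : 0 < dlow)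
    (hdlow : ∀ z, dlow ≤ d z) (hε₁ : 0 ≤ ε₁) (hk : k ∈ J) (hxA : x ∈ A) (hxC : x ∈ C)
    (h0 : ∀ l ∈ I, l ∉ J → ψ l x = 0) (hψ : ψ k x ^ 2 ≤ (1 + ε₁) / ∑ z ∈ A, d z)
    (hψ' : ∀ l ∈ J, l ≠ k → ψ l x ^ 2 ≤ ε₁ / ∑ z ∈ C, d z) :
    embeddingNorm ψ I x ≤ 1 / (n * dlow) * (K / δ) * (1 + 2 * ε₁) := by
  have hδn : 0 < δ * n := hC ▸ Nat.cast_pos.mpr (card_pos.mpr ⟨x, hxC⟩)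
  have hK : (K : ℝ) ≠ 0 := hJ ▸ Nat.cast_ne_zero.mpr (card_ne_zero_of_mem hk)
  calc embeddingNorm ψ I x
      ≤ (1 + ε₁) / (#A * dlow) + ((#J : ℝ) - 1) * (ε₁ / (#C * dlow)) :=
        embeddingNorm_le_div_add_card_sub_one_mul_div hJI hk hxA hxC (by positivity) hε₁ hpos
          hdlow h0 hψ hψ'
    _ = (1 + ε₁) / (δ * n / K * dlow) + ((K : ℝ) - 1) * (ε₁ / (δ * n * dlow)) := by
        rw [hA, hC, hJ]
    _ ≤ 1 / (n * dlow) * (K / δ) * (1 + 2 * ε₁) := div_add_sub_one_mul_div_le hδn hpos hK hε₁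

end Separation

theorem embedding_norm_initial_separation_general
    {ι V : Type*} [DecidableEq ι] [Fintype V] [DecidableEq V]
    {C : Finset V} (hCne : C.Nonempty) {K : ℕ} {Cl : Fin K → Finset V}
    (hCldisj : ∀ j j', j ≠ j' → Disjoint (Cl j) (Cl j')) (hClcover : ∀ x ∈ C, ∃ j, x ∈ Cl j)
    {δ : ℝ} (hCcard : (#C : ℝ) = δ * Fintype.card V)
    (hClcard : ∀ j, (#(Cl j) : ℝ) = δ * Fintype.card V / K)
    {d : V → ℝ} {dlow dup : ℝ} (hdlow : ∀ x, dlow ≤ d x) (hdup : ∀ x, d x ≤ dup)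
    (hdpos : 0 < dlow)
    {ψ : ι → V → ℝ} {I : Finset ι} {ε₁ ε₂ : ℝ} (hε₁ : 0 ≤ ε₁) (hε₁' : ε₁ ≤ 1) (hε₂ : 0 ≤ ε₂)
    {σ : Fin K → ι} (hσ : Function.Injective σ) (hσI : ∀ j, σ j ∈ I)
    (hCsupp : ∀ j, ∀ x ∈ Cᶜ, ψ (σ j) x = 0)
    (hBsupp : ∀ k ∈ I, k ∉ univ.image σ → ∀ x ∈ C, ψ k x = 0)
    (hlow : ∀ j, ∀ x ∈ Cl j, (1 - ε₁) / (∑ y ∈ Cl j, d y) ≤ ψ (σ j) x ^ 2)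
    (hup : ∀ j, ∀ x ∈ Cl j, ψ (σ j) x ^ 2 ≤ (1 + ε₁) / (∑ y ∈ Cl j, d y))
    (hoff : ∀ j, ∀ x ∈ C, x ∉ Cl j → ψ (σ j) x ^ 2 ≤ ε₁ / (∑ y ∈ C, d y))
    (hBbound : ∀ k ∈ I, k ∉ univ.image σ → ∀ x ∈ Cᶜ, ψ k x ^ 2 ≤ (1 + ε₂) / (∑ y ∈ Cᶜ, d y))
    (hmargin : 0 < separationMargin dlow dup δ ε₁ ε₂ K #I) :
    0 < 1 / (Fintype.card V * dlow) * (K / δ) * separationMargin dlow dup δ ε₁ ε₂ K #I ∧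
    (∀ x ∈ C, ∀ y ∈ Cᶜ,
      1 / (Fintype.card V * dlow) * (K / δ) * separationMargin dlow dup δ ε₁ ε₂ K #I ≤
        embeddingNorm ψ I x - embeddingNorm ψ I y) ∧
    ∀ x, embeddingNorm ψ I x ≤ 1 / (Fintype.card V * dlow) * (K / δ) * (1 + 2 * ε₁) := by
  obtain ⟨x₀, hx₀⟩ := hCne
  have hn : (0 : ℝ) < Fintype.card V := by exact_mod_cast Fintype.card_pos_iff.mpr ⟨x₀⟩
  have hK : (0 : ℝ) < K := by exact_mod_cast (hClcover x₀ hx₀).choose.pos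
  have hδ : 0 < δ := by
    have hC : (0 : ℝ) < #C := by exact_mod_cast card_pos.mpr ⟨x₀, hx₀⟩
    exact pos_of_mul_pos_left (hCcard ▸ hC) hn.le
  have hBcard : (#Cᶜ : ℝ) = (1 - δ) * Fintype.card V := by
    have hcard : (#C : ℝ) + #Cᶜ = Fintype.card V := by exact_mod_cast card_add_card_compl C
    linarith
  have hJI : univ.image σ ⊆ I := image_subset_iff.mpr fun j _ => hσI j
  have hJcard : #(univ.image σ) = K := by rw [card_image_of_injective _ hσ, card_fin]
  have hgap : 0 < 1 / (Fintype.card V * dlow) * (K / δ) *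
      separationMargin dlow dup δ ε₁ ε₂ K #I := by positivity
  have hsep : ∀ x ∈ C, ∀ y ∈ Cᶜ,
      1 / (Fintype.card V * dlow) * (K / δ) * separationMargin dlow dup δ ε₁ ε₂ K #I ≤
        embeddingNorm ψ I x - embeddingNorm ψ I y := by
    intro x hx y hy
    obtain ⟨j, hj⟩ := hClcover x hx
    exact mul_separationMargin_le_embeddingNorm_sub hJI hJcard (hClcard j) hBcard hdpos hdlow hdup
      hε₁' (by positivity) (hσI j) hj (hlow j x hj) hy
      (forall_mem_image.mpr fun i _ => hCsupp i y hy) fun k hkI hkJ => hBbound k hkI hkJ y hy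
  have hupC : ∀ x ∈ C,
      embeddingNorm ψ I x ≤ 1 / (Fintype.card V * dlow) * (K / δ) * (1 + 2 * ε₁) := by
    intro x hx
    obtain ⟨j, hj⟩ := hClcover x hx
    have hoff_x : ∀ l ∈ univ.image σ, l ≠ σ j → ψ l x ^ 2 ≤ ε₁ / ∑ y ∈ C, d y :=
      forall_mem_image.mpr fun i _ hij => hoff i x hx
        (disjoint_left.mp (hCldisj j i fun h => hij (h ▸ rfl)) hj)
    exact embeddingNorm_le_mul_one_add_two_mul hJI hJcard (hClcard j) hCcard hdpos hdlow hε₁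
      (mem_image_of_mem σ (mem_univ j)) hj hx (fun l hlI hlJ => hBsupp l hlI hlJ x hx)
      (hup j x hj) hoff_x
  refine ⟨hgap, hsep, fun x => ?_⟩
  by_cases hx : x ∈ C
  · exact hupC x hx
  · linarith [hsep x₀ hx₀ x (mem_compl.mpr hx), hupC x₀ hx₀]

/-- Initial separation of `C` from `B` by the spectral embedding norm
`S(x,0) = ∑_{k∈I} ψ_k(x)²`. Under Assumption A1 (eigenvector structure at `t = 0`) and
Assumption A2 (`(#) > 0`), (1) `S(x,0) - S(y,0) ≥ g0 = (1/(n d0low))(K/δ)(#) > 0` for all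
`x ∈ C`, `y ∈ B`, and (2) `sup_x S(x,0) ≤ (1/(n d0low))(K/δ)(1+2ε1)`. -/
theorem embedding_norm_initial_separation
    {V : Type*} [Fintype V] [DecidableEq V] [Nonempty V]
    (B C : Finset V) (hdisj : Disjoint B C) (hunion : B ∪ C = Finset.univ)
    (hBne : B.Nonempty) (hCne : C.Nonempty)
    (K : ℕ) (hK : 0 < K) (Cl : Fin K → Finset V)
    (hClsub : ∀ j, Cl j ⊆ C)
    (hCldisj : ∀ j j', j ≠ j' → Disjoint (Cl j) (Cl j'))
    (hClcover : ∀ x ∈ C, ∃ j, x ∈ Cl j)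
    (δ : ℝ) (hδ0 : 0 < δ) (hδ1 : δ < 1)
    (hCcard : (C.card : ℝ) = δ * Fintype.card V)
    (hClcard : ∀ j, ((Cl j).card : ℝ) = δ * Fintype.card V / K)
    (W0 : Matrix V V ℝ) (hW0symm : W0.IsSymm)
    (hW0nonneg : ∀ x y, 0 ≤ W0 x y)
    (hW0cross : ∀ x y, ((x ∈ B ∧ y ∈ C) ∨ (x ∈ C ∧ y ∈ B)) → W0 x y = 0)
    (d : V → ℝ) (hd : ∀ x, d x = ∑ y, W0 x y)
    (d0low d0up : ℝ)
    (hd0low : d0low = Finset.univ.inf' Finset.univ_nonempty d)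
    (hd0up : d0up = Finset.univ.sup' Finset.univ_nonempty d)
    (hd0pos : 0 < d0low)
    -- eigendata of P(0) = D(0)⁻¹ W0, indexed by k : V, D(0)-orthonormal
    (lam : V → ℝ) (ψ : V → V → ℝ)
    (heig : ∀ k x, ∑ y, W0 x y * ψ k y = lam k * (d x * ψ k x))
    (horth : ∀ k l, ∑ x, ψ k x * d x * ψ l x = if k = l then 1 else 0)
    (I : Finset V)
    (ε1 ε2 : ℝ) (hε1 : 0 ≤ ε1) (hε1' : ε1 < 1) (hε2 : 0 ≤ ε2)
    -- Assumption A1: K eigenvectors in I supported on C, one per cluster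
    (σ : Fin K → V) (hσinj : Function.Injective σ)
    (hσI : ∀ j, σ j ∈ I)
    (hCsupp : ∀ j, ∀ x ∈ B, ψ (σ j) x = 0)
    (hBsupp : ∀ k ∈ I, k ∉ Finset.univ.image σ → ∀ x ∈ C, ψ k x = 0)
    (hlow : ∀ j, ∀ x ∈ Cl j, (1 - ε1) / (∑ y ∈ Cl j, d y) ≤ (ψ (σ j) x) ^ 2)
    (hup : ∀ j, ∀ x ∈ Cl j, (ψ (σ j) x) ^ 2 ≤ (1 + ε1) / (∑ y ∈ Cl j, d y))
    (hoff : ∀ j, ∀ x ∈ C, x ∉ Cl j → (ψ (σ j) x) ^ 2 ≤ ε1 / (∑ y ∈ C, d y))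
    (hBbound : ∀ k ∈ I, k ∉ Finset.univ.image σ →
      ∀ x ∈ B, (ψ k x) ^ 2 ≤ (1 + ε2) / (∑ y ∈ B, d y))
    -- Assumption A2: (#) > 0
    (hash : ℝ)
    (hhash : hash = d0low * (1 - ε1) / d0up
      - (δ / (1 - δ)) * (((I.card : ℝ) - K) / K) * (1 + ε2))
    (hA2 : 0 < hash) :
    0 < (1 / (Fintype.card V * d0low)) * (K / δ) * hash ∧
    (∀ x ∈ C, ∀ y ∈ B,
        (1 / (Fintype.card V * d0low)) * (K / δ) * hash
          ≤ (∑ k ∈ I, (ψ k x) ^ 2) - ∑ k ∈ I, (ψ k y) ^ 2) ∧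
    (∀ x : V, ∑ k ∈ I, (ψ k x) ^ 2 ≤ (1 / (Fintype.card V * d0low)) * (K / δ) * (1 + 2 * ε1)) := by
  obtain rfl : B = Cᶜ := IsCompl.eq_compl ⟨hdisj, codisjoint_iff.mpr hunion⟩
  subst hhash
  exact embedding_norm_initial_separation_general hCne hCldisj hClcover hCcard hClcard
    (fun x => hd0low ▸ inf'_le d (mem_univ x)) (fun x => hd0up ▸ le_sup' d (mem_univ x)) hd0pos
    hε1 hε1'.le hε2 hσinj hσI hCsupp hBsupp hlow hup hoff hBbound hA2
end

section
/- Let W, D : ℝ → (n×n real matrices) be differentiable at t, with W(s) and D(s) symmetric for s near t, and let λ : ℝ → ℝ and ψ : ℝ → ℝⁿ be differentiable at t and satisfy, for s near t, the generalized eigen-equation W(s)ψ(s) = λ(s)D(s)ψ(s) and the normalization ψ(s)ᵀD(s)ψ(s) = 1. Then the Hadamard variation formula holds: λ'(t) = ψ(t)ᵀ(W'(t) − λ(t)D'(t))ψ(t). -/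
open Matrix

/-!
If `φ` is a left eigenvector of the pencil `(W t, D t)` for `lam t`, then the row vector
`φ ᵥ* (W s - lam t • D s)` vanishes at `s = t`. Pairing it with the right eigenvector `ψ s` gives
`(lam s - lam t) * (φ ⬝ᵥ D s *ᵥ ψ s)`. The product of a differentiable factor vanishing at `t` and a
factor merely continuous at `t` is differentiable at `t`, so `lam` can be differentiated without
differentiating `ψ`. In the symmetric case `ψ t` is itself a left eigenvector.
-/

section Pencil

variable {m n R : Type*} [Fintype m] [Fintype n]

theorem vecMul_sub_smul_dotProduct_of_mulVec_eq_smul [CommRing R] {W D : Matrix m n R} {μ : R}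
    {v : n → R} (h : W *ᵥ v = μ • D *ᵥ v) (φ : m → R) (ν : R) :
    φ ᵥ* (W - ν • D) ⬝ᵥ v = (μ - ν) * (φ ⬝ᵥ D *ᵥ v) := by
  rw [← dotProduct_mulVec, sub_mulVec, smul_mulVec, h, ← sub_smul, dotProduct_smul, smul_eq_mul]

theorem vecMul_eq_smul_of_isSymm [NonUnitalCommSemiring R] {W D : Matrix n n R} (hW : W.IsSymm)
    (hD : D.IsSymm) {μ : R} {v : n → R} (h : W *ᵥ v = μ • D *ᵥ v) : v ᵥ* W = μ • v ᵥ* D := by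
  rwa [← mulVec_transpose, ← mulVec_transpose, hW.eq, hD.eq]

end Pencil

theorem tendsto_dotProduct {n R X : Type*} [Fintype n] [NonUnitalNonAssocSemiring R]
    [TopologicalSpace R] [IsTopologicalSemiring R] {l : Filter X} {u v : X → n → R} {a b : n → R}
    (hu : Filter.Tendsto u l (nhds a)) (hv : Filter.Tendsto v l (nhds b)) :
    Filter.Tendsto (fun x => u x ⬝ᵥ v x) l (nhds (a ⬝ᵥ b)) :=
  tendsto_finsetSum _ fun i _ => (hu.apply_nhds i).mul (hv.apply_nhds i)

section Derivative

variable {𝕜 m n : Type*} [NontriviallyNormedField 𝕜] {t : 𝕜}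

theorem hasDerivAt_vecMul {R : Type*} [NormedRing R] [NormedAlgebra 𝕜 R] [Fintype m]
    {A : 𝕜 → Matrix m n R} {A' : Matrix m n R}
    (hA : ∀ i j, HasDerivAt (fun s => A s i j) (A' i j) t) (φ : m → R) :
    HasDerivAt (fun s => φ ᵥ* A s) (φ ᵥ* A') t :=
  hasDerivAt_pi.2 fun j => HasDerivAt.fun_sum fun i _ => (hA i j).const_mul (φ i)

variable [Fintype n]

theorem hasDerivAt_dotProduct_of_eq_zero {R : Type*} [NormedRing R] [NormedAlgebra 𝕜 R]
    {u v : 𝕜 → n → R} {u' : n → R} (hu : HasDerivAt u u' t) (hut : u t = 0)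
    (hv : ContinuousAt v t) : HasDerivAt (fun s => u s ⬝ᵥ v s) (u' ⬝ᵥ v t) t := by
  have hslope : slope (fun s => u s ⬝ᵥ v s) t = fun s => slope u t s ⬝ᵥ v s := by
    funext s
    simp only [slope_def_module, hut, zero_dotProduct, sub_zero, smul_dotProduct]
  rw [hasDerivAt_iff_tendsto_slope, hslope]
  exact tendsto_dotProduct hu.tendsto_slope (hv.tendsto.mono_left nhdsWithin_le_nhds)

theorem hadamard_eigenvalue_variation_general [Fintype m] {𝕂 : Type*} [NormedField 𝕂]
    [NormedAlgebra 𝕜 𝕂] {W D : 𝕜 → Matrix m n 𝕂} {W' D' : Matrix m n 𝕂}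
    (hW : ∀ i j, HasDerivAt (fun s => W s i j) (W' i j) t)
    (hD : ∀ i j, HasDerivAt (fun s => D s i j) (D' i j) t)
    {lam : 𝕜 → 𝕂} {φ : m → 𝕂} {ψ : 𝕜 → n → 𝕂} (hψ : ContinuousAt ψ t)
    (hleft : φ ᵥ* W t = lam t • φ ᵥ* D t)
    (hright : ∀ᶠ s in nhds t, W s *ᵥ ψ s = lam s • D s *ᵥ ψ s)
    (hne : φ ⬝ᵥ D t *ᵥ ψ t ≠ 0) :
    HasDerivAt lam ((φ ⬝ᵥ (W' - lam t • D') *ᵥ ψ t) / (φ ⬝ᵥ D t *ᵥ ψ t)) t := by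
  let u : 𝕜 → n → 𝕂 := fun s => φ ᵥ* (W s - lam t • D s)
  let d : 𝕜 → 𝕂 := fun s => φ ⬝ᵥ D s *ᵥ ψ s
  have hu : HasDerivAt u (φ ᵥ* (W' - lam t • D')) t :=
    hasDerivAt_vecMul (fun i j => (hW i j).sub ((hD i j).const_mul (lam t))) φ
  have hut : u t = 0 := by
    simp only [u, vecMul_sub, vecMul_smul, hleft, sub_self]
  have hd : ContinuousAt d t := by
    simp only [d, dotProduct_mulVec]
    exact tendsto_dotProduct (hasDerivAt_vecMul hD φ).continuousAt hψ
  have hlam : lam =ᶠ[nhds t] fun s => lam t + u s ⬝ᵥ (d s)⁻¹ • ψ s := by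
    filter_upwards [hright, hd.eventually_ne hne] with s hs hds
    rw [dotProduct_smul, vecMul_sub_smul_dotProduct_of_mulVec_eq_smul hs, smul_eq_mul,
      mul_comm (lam s - lam t), inv_mul_cancel_left₀ hds, add_sub_cancel]
  have hvalue : (φ ⬝ᵥ (W' - lam t • D') *ᵥ ψ t) / (φ ⬝ᵥ D t *ᵥ ψ t) =
      φ ᵥ* (W' - lam t • D') ⬝ᵥ (d t)⁻¹ • ψ t := by
    rw [dotProduct_smul, ← dotProduct_mulVec, smul_eq_mul, div_eq_inv_mul]
  rw [hvalue]
  exact ((hasDerivAt_dotProduct_of_eq_zero hu hut ((hd.inv₀ hne).smul hψ)).const_add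
    (lam t)).congr_of_eventuallyEq hlam

end Derivative

/-- Hadamard variation formula for a generalized eigenvalue: if
`W(s)ψ(s) = λ(s)D(s)ψ(s)` and `ψ(s)ᵀD(s)ψ(s) = 1` for `s` near `t`, with everything
differentiable at `t` and `W(s)`, `D(s)` symmetric near `t`, then
`λ'(t) = ψ(t)ᵀ(W'(t) − λ(t)D'(t))ψ(t)`. -/
theorem hadamard_eigenvalue_variation {n : ℕ}
    (W D : ℝ → Matrix (Fin n) (Fin n) ℝ)
    (W' D' : Matrix (Fin n) (Fin n) ℝ) (t : ℝ)
    (hW : ∀ i j, HasDerivAt (fun s => W s i j) (W' i j) t)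
    (hD : ∀ i j, HasDerivAt (fun s => D s i j) (D' i j) t)
    (hWsymm : ∀ᶠ s in nhds t, (W s).IsSymm)
    (hDsymm : ∀ᶠ s in nhds t, (D s).IsSymm)
    (lam : ℝ → ℝ) (lam' : ℝ) (hlam : HasDerivAt lam lam' t)
    (ψ : ℝ → Fin n → ℝ) (ψ' : Fin n → ℝ)
    (hψ : ∀ i, HasDerivAt (fun s => ψ s i) (ψ' i) t)
    (heig : ∀ᶠ s in nhds t, (W s).mulVec (ψ s) = lam s • (D s).mulVec (ψ s))
    (hnorm : ∀ᶠ s in nhds t, ψ s ⬝ᵥ (D s).mulVec (ψ s) = 1) :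
    lam' = ψ t ⬝ᵥ (W' - lam t • D').mulVec (ψ t) := by
  have hleft := vecMul_eq_smul_of_isSymm hWsymm.self_of_nhds hDsymm.self_of_nhds
    heig.self_of_nhds
  simpa only [hnorm.self_of_nhds, div_one] using
    hlam.unique <| hadamard_eigenvalue_variation_general hW hD (hasDerivAt_pi.2 hψ).continuousAt
      hleft heig (hnorm.self_of_nhds.trans_ne one_ne_zero)
end

section
/- Let W, D : ℝ → (n×n real matrices) be differentiable at t with W(s), D(s) symmetric near t, and let λ_1,…,λ_n : ℝ → ℝ and ψ_1,…,ψ_n : ℝ → ℝⁿ be differentiable at t, satisfying for s near t the eigen-equations W(s)ψ_k(s) = λ_k(s)D(s)ψ_k(s) and the D-orthonormality ψ_k(s)ᵀD(s)ψ_j(s) = δ_{kj} for all k,j, and suppose D(t) is invertible and the eigenvalues λ_1(t),…,λ_n(t) are pairwise distinct. Then for each k, ψ_k'(t) = −(1/2)(ψ_k(t)ᵀD'(t)ψ_k(t))·ψ_k(t) + Σ_{j≠k} [ψ_j(t)ᵀ(W'(t) − λ_k(t)D'(t))ψ_k(t) / (λ_k(t) − λ_j(t))]·ψ_j(t). -/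
open Matrix Finset

/-!
A full `D`-orthonormal family of eigenvectors diagonalizes both `D` and `W` by congruence, so each
`ψ_j` is also a left eigenvector. Differentiating the eigen-equation `W ψ = λ D ψ` and pairing with
`ψ_j` therefore turns `W ψ'` into `λ_j D ψ'` and gives `λ - λ_j` times the coefficient of `ψ'` along
`ψ_j`. The coefficient along `ψ` itself comes from differentiating the normalization `ψᵀ D ψ = 1`.
The normalization also gives `λ = ψᵀ W ψ` near `t`, which is why `λ` is differentiable.
-/

section OrthonormalFamily

variable {ι R : Type*} [Fintype ι] [DecidableEq ι] [CommRing R]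

/-- Orthonormality for the bilinear form `(x, y) ↦ xᵀ D y`, the generalized inner product of the
eigenvalue problem. The family is indexed by the coordinates, so it has the size of a basis. -/
def IsFormOrthonormal (D : Matrix ι ι R) (φ : ι → ι → R) : Prop :=
  ∀ i j, φ i ⬝ᵥ D *ᵥ φ j = if i = j then 1 else 0

namespace IsFormOrthonormal

variable {D : Matrix ι ι R} {φ : ι → ι → R}

theorem eq_sum (h : IsFormOrthonormal D φ) (v : ι → R) :
    v = ∑ j, (φ j ⬝ᵥ D *ᵥ v) • φ j := by
  have right_inv : of φ * (D * (of φ)ᵀ) = 1 := by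
    ext i j
    rw [one_apply]
    exact h i j
  have left_inv : (of φ)ᵀ * (of φ * D) = 1 := by
    rwa [← Matrix.mul_assoc, mul_eq_one_comm] at right_inv
  calc
    v = (of φ)ᵀ *ᵥ (of φ *ᵥ (D *ᵥ v)) := by
      rw [mulVec_mulVec, mulVec_mulVec, Matrix.mul_assoc, left_inv, one_mulVec]
    _ = ∑ j, (φ j ⬝ᵥ D *ᵥ v) • φ j := by
      rw [mulVec_transpose, vecMul_eq_sum]
      rfl

theorem ext_dotProduct (h : IsFormOrthonormal D φ) {x y : ι → R}
    (hxy : ∀ j, x ⬝ᵥ φ j = y ⬝ᵥ φ j) : x = y := by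
  refine dotProduct_eq x y fun v => ?_
  rw [h.eq_sum v]
  simp only [dotProduct_sum, dotProduct_smul, hxy]

theorem vecMul_eq_mulVec (h : IsFormOrthonormal D φ) (i : ι) : φ i ᵥ* D = D *ᵥ φ i := by
  refine h.ext_dotProduct fun j => ?_
  rw [← dotProduct_mulVec, dotProduct_comm (D *ᵥ φ i), h i j, h j i]
  simp only [eq_comm]

theorem vecMul_eq_smul_vecMul (h : IsFormOrthonormal D φ) {W : Matrix ι ι R} {μ : ι → R}
    (heig : ∀ j, W *ᵥ φ j = μ j • D *ᵥ φ j) (i : ι) : φ i ᵥ* W = μ i • φ i ᵥ* D := by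
  refine h.ext_dotProduct fun j => ?_
  rw [smul_dotProduct, ← dotProduct_mulVec, ← dotProduct_mulVec, heig j, dotProduct_smul, h i j]
  split_ifs with hij
  · rw [hij]
  · simp only [smul_zero]

end IsFormOrthonormal

end OrthonormalFamily

section ProductRules

variable {𝕜 𝔸 m ι : Type*} [NontriviallyNormedField 𝕜] [NormedRing 𝔸] [NormedAlgebra 𝕜 𝔸]
  [Fintype ι] {t : 𝕜}

theorem hasDerivAt_dotProduct {u v : 𝕜 → ι → 𝔸} {u' v' : ι → 𝔸}
    (hu : HasDerivAt u u' t) (hv : HasDerivAt v v' t) :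
    HasDerivAt (fun s => u s ⬝ᵥ v s) (u' ⬝ᵥ v t + u t ⬝ᵥ v') t := by
  simp only [dotProduct, ← sum_add_distrib]
  exact HasDerivAt.fun_sum fun i _ => (hasDerivAt_pi.1 hu i).mul (hasDerivAt_pi.1 hv i)

theorem hasDerivAt_mulVec [Finite m] {A : 𝕜 → Matrix m ι 𝔸} {A' : Matrix m ι 𝔸}
    {v : 𝕜 → ι → 𝔸} {v' : ι → 𝔸} (hA : ∀ i j, HasDerivAt (fun s => A s i j) (A' i j) t)
    (hv : HasDerivAt v v' t) :
    HasDerivAt (fun s => A s *ᵥ v s) (A' *ᵥ v t + A t *ᵥ v') t := by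
  have := Fintype.ofFinite m
  exact hasDerivAt_pi.2 fun i => hasDerivAt_dotProduct (hasDerivAt_pi.2 (hA i)) hv

end ProductRules

section EigenpairVariation

variable {𝕜 ι : Type*} [NontriviallyNormedField 𝕜] [Fintype ι] {t : 𝕜}
  {W D : 𝕜 → Matrix ι ι 𝕜} {W' D' : Matrix ι ι 𝕜}
  {lam : 𝕜 → 𝕜} {ψ : 𝕜 → ι → 𝕜} {ψ' : ι → 𝕜}

theorem differentiableAt_eigenvalue
    (hW : ∀ i j, HasDerivAt (fun s => W s i j) (W' i j) t) (hψ : HasDerivAt ψ ψ' t)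
    (heig : ∀ᶠ s in nhds t, W s *ᵥ ψ s = lam s • D s *ᵥ ψ s)
    (hnorm : ∀ᶠ s in nhds t, ψ s ⬝ᵥ D s *ᵥ ψ s = 1) : DifferentiableAt 𝕜 lam t := by
  have rayleigh : ∀ᶠ s in nhds t, lam s = ψ s ⬝ᵥ W s *ᵥ ψ s := by
    filter_upwards [heig, hnorm] with s heig_s hnorm_s
    rw [heig_s, dotProduct_smul, hnorm_s, smul_eq_mul, mul_one]
  have hasDerivAt_rayleigh := hasDerivAt_dotProduct hψ (hasDerivAt_mulVec hW hψ)
  exact (hasDerivAt_rayleigh.congr_of_eventuallyEq rayleigh).differentiableAt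

theorem dotProduct_sub_smul_mulVec_of_left_eigenvector {lam' ν : 𝕜} {x : ι → 𝕜}
    (hW : ∀ i j, HasDerivAt (fun s => W s i j) (W' i j) t)
    (hD : ∀ i j, HasDerivAt (fun s => D s i j) (D' i j) t)
    (hlam : HasDerivAt lam lam' t) (hψ : HasDerivAt ψ ψ' t)
    (heig : ∀ᶠ s in nhds t, W s *ᵥ ψ s = lam s • D s *ᵥ ψ s)
    (hx : x ᵥ* W t = ν • x ᵥ* D t) :
    x ⬝ᵥ (W' - lam t • D') *ᵥ ψ t =
      (lam t - ν) * (x ⬝ᵥ D t *ᵥ ψ') + lam' * (x ⬝ᵥ D t *ᵥ ψ t) := by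
  have deriv_eq : W' *ᵥ ψ t + W t *ᵥ ψ' =
      lam t • (D' *ᵥ ψ t + D t *ᵥ ψ') + lam' • D t *ᵥ ψ t :=
    (hasDerivAt_mulVec hW hψ).unique
      ((hlam.smul (hasDerivAt_mulVec hD hψ)).congr_of_eventuallyEq heig)
  have pairing_W : x ⬝ᵥ W t *ᵥ ψ' = ν * (x ⬝ᵥ D t *ᵥ ψ') := by
    rw [dotProduct_mulVec, hx, smul_dotProduct, ← dotProduct_mulVec, smul_eq_mul]
  have pairing := congrArg (x ⬝ᵥ ·) deriv_eq
  simp only [dotProduct_add, dotProduct_smul, smul_eq_mul, pairing_W] at pairing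
  rw [sub_mulVec, smul_mulVec, dotProduct_sub, dotProduct_smul, smul_eq_mul]
  linear_combination pairing

theorem dotProduct_mulVec_deriv_of_normalized [NeZero (2 : 𝕜)]
    (hD : ∀ i j, HasDerivAt (fun s => D s i j) (D' i j) t) (hψ : HasDerivAt ψ ψ' t)
    (hnorm : ∀ᶠ s in nhds t, ψ s ⬝ᵥ D s *ᵥ ψ s = 1) (hsymm : ψ t ᵥ* D t = D t *ᵥ ψ t) :
    ψ t ⬝ᵥ D t *ᵥ ψ' = -(1 / 2) * (ψ t ⬝ᵥ D' *ᵥ ψ t) := by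
  have deriv_eq : ψ' ⬝ᵥ D t *ᵥ ψ t + ψ t ⬝ᵥ (D' *ᵥ ψ t + D t *ᵥ ψ') = 0 :=
    (hasDerivAt_dotProduct hψ (hasDerivAt_mulVec hD hψ)).unique
      ((hasDerivAt_const t 1).congr_of_eventuallyEq hnorm)
  have swap : ψ' ⬝ᵥ D t *ᵥ ψ t = ψ t ⬝ᵥ D t *ᵥ ψ' := by
    rw [dotProduct_mulVec (ψ t), hsymm, dotProduct_comm]
  rw [dotProduct_add, swap] at deriv_eq
  field_simp
  linear_combination deriv_eq

theorem hadamard_eigenvector_variation_general [NeZero (2 : 𝕜)] [DecidableEq ι]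
    (hW : ∀ i j, HasDerivAt (fun s => W s i j) (W' i j) t)
    (hD : ∀ i j, HasDerivAt (fun s => D s i j) (D' i j) t)
    (hψ : HasDerivAt ψ ψ' t)
    (heig : ∀ᶠ s in nhds t, W s *ᵥ ψ s = lam s • D s *ᵥ ψ s)
    (hnorm : ∀ᶠ s in nhds t, ψ s ⬝ᵥ D s *ᵥ ψ s = 1)
    {μ : ι → 𝕜} {φ : ι → ι → 𝕜} (hφ : IsFormOrthonormal (D t) φ)
    (hφ_eig : ∀ j, W t *ᵥ φ j = μ j • D t *ᵥ φ j)
    {k : ι} (hψt : ψ t = φ k) (hsimple : ∀ j ≠ k, μ j ≠ μ k) :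
    ψ' = (-(1 / 2) * (φ k ⬝ᵥ D' *ᵥ φ k)) • φ k
      + ∑ j ∈ univ.erase k, ((φ j ⬝ᵥ (W' - μ k • D') *ᵥ φ k) / (μ k - μ j)) • φ j := by
  have hlamt : lam t = μ k := by
    have eig_eq : lam t • D t *ᵥ φ k = μ k • D t *ᵥ φ k := by
      rw [← hφ_eig k, ← hψt, heig.self_of_nhds]
    simpa [hφ k k] using congrArg (φ k ⬝ᵥ ·) eig_eq
  have coeff_self : φ k ⬝ᵥ D t *ᵥ ψ' = -(1 / 2) * (φ k ⬝ᵥ D' *ᵥ φ k) := by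
    rw [← hψt]
    exact dotProduct_mulVec_deriv_of_normalized hD hψ hnorm (hψt ▸ hφ.vecMul_eq_mulVec k)
  have coeff_of_ne : ∀ j ≠ k, φ j ⬝ᵥ D t *ᵥ ψ' =
      (φ j ⬝ᵥ (W' - μ k • D') *ᵥ φ k) / (μ k - μ j) := by
    intro j hj
    have hlam := (differentiableAt_eigenvalue hW hψ heig hnorm).hasDerivAt
    have variation := dotProduct_sub_smul_mulVec_of_left_eigenvector hW hD hlam hψ heig
      (hφ.vecMul_eq_smul_vecMul hφ_eig j)
    rw [hψt, hlamt, hφ j k, if_neg hj, mul_zero, add_zero] at variation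
    rw [variation, mul_div_cancel_left₀ _ (sub_ne_zero.2 (hsimple j hj).symm)]
  calc
    ψ' = ∑ j, (φ j ⬝ᵥ D t *ᵥ ψ') • φ j := hφ.eq_sum ψ'
    _ = (φ k ⬝ᵥ D t *ᵥ ψ') • φ k + ∑ j ∈ univ.erase k, (φ j ⬝ᵥ D t *ᵥ ψ') • φ j :=
      (add_sum_erase _ _ (mem_univ k)).symm
    _ = _ := by
      rw [coeff_self]
      congr 1
      exact sum_congr rfl fun j hj => by rw [coeff_of_ne j (ne_of_mem_erase hj)]

end EigenpairVariation

/-- Hadamard variation formula for generalized eigenvectors: with a full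
`D(t)`-orthonormal family of generalized eigenpairs, `D(t)` invertible and the eigenvalues
pairwise distinct at `t`,
`ψ_k'(t) = −(1/2)(ψ_kᵀD'ψ_k)ψ_k + ∑_{j≠k} [ψ_jᵀ(W'−λ_k D')ψ_k / (λ_k−λ_j)] ψ_j`. -/
theorem hadamard_eigenvector_variation {n : ℕ}
    (W D : ℝ → Matrix (Fin n) (Fin n) ℝ)
    (Wd Dd : Matrix (Fin n) (Fin n) ℝ) (t : ℝ)
    (hW : ∀ i j, HasDerivAt (fun s => W s i j) (Wd i j) t)
    (hD : ∀ i j, HasDerivAt (fun s => D s i j) (Dd i j) t)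
    (hWsymm : ∀ᶠ s in nhds t, (W s).IsSymm)
    (hDsymm : ∀ᶠ s in nhds t, (D s).IsSymm)
    (lam : Fin n → ℝ → ℝ) (lamd : Fin n → ℝ)
    (hlam : ∀ k, HasDerivAt (lam k) (lamd k) t)
    (ψ : Fin n → ℝ → Fin n → ℝ) (ψd : Fin n → Fin n → ℝ)
    (hψ : ∀ k i, HasDerivAt (fun s => ψ k s i) (ψd k i) t)
    (heig : ∀ k, ∀ᶠ s in nhds t,
      (W s).mulVec (ψ k s) = lam k s • (D s).mulVec (ψ k s))
    (horth : ∀ k j, ∀ᶠ s in nhds t,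
      ψ k s ⬝ᵥ (D s).mulVec (ψ j s) = if k = j then 1 else 0)
    (hDinv : IsUnit (D t))
    (hdist : Function.Injective fun k => lam k t) :
    ∀ k i, ψd k i =
      -(1 / 2) * (ψ k t ⬝ᵥ Dd.mulVec (ψ k t)) * ψ k t i
        + ∑ j ∈ Finset.univ.erase k,
            ((ψ j t ⬝ᵥ (Wd - lam k t • Dd).mulVec (ψ k t)) / (lam k t - lam j t))
              * ψ j t i := by
  intro k i
  have general := hadamard_eigenvector_variation_general hW hD (hasDerivAt_pi.2 (hψ k)) (heig k)
    ((horth k k).mono fun _ h => h.trans (if_pos rfl)) (fun j l => (horth j l).self_of_nhds)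
    (fun j => (heig j).self_of_nhds) rfl fun j hj h => hj (hdist h)
  simpa only [Pi.add_apply, Finset.sum_apply, Pi.smul_apply, smul_eq_mul] using congrFun general i
end

section
/- Suppose for each k = 1,…,n there are differentiable functions λ_k : [0,1] → ℝ and ψ_k : [0,1] → ℝ^V such that W(t)ψ_k(t) = λ_k(t)D(t)ψ_k(t), ψ_k(t)ᵀD(t)ψ_j(t) = δ_{kj} for all k,j, and |λ_k(t)| ≤ 1, for all t∈[0,1]. Then the eigenvalues deform stably: |λ_k(t) − λ_k(0)| ≤ (4·C_conn/d0_low)·t for every k and every t∈[0,1]. -/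
open Finset

/-!
For symmetric pencils with `A(s) ψ(s) = λ(s) M(s) ψ(s)`, pairing the equation at `s` with `ψ(t)` and
the one at `t` with `ψ(s)` gives
`(λ(s) - λ(t)) ψ(s)ᵀM(t)ψ(t) = ψ(s)ᵀ((A(s) - A(t)) - λ(s)(M(s) - M(t)))ψ(t)`.
Dividing by `s - t` and letting `s → t` yields the Hellmann–Feynman formula
`λ' = ψᵀ(A' - λM')ψ / ψᵀMψ`, for which `ψ` need only be continuous. Here `A' = E` and `M'` is the
degree matrix `D_E` of `E`. Nonnegativity of the weights gives `|ψᵀEψ| ≤ ψᵀD_Eψ` and `|λ| ≤ 1`, so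
`|λ'| ≤ 2 ψᵀD_Eψ / ψᵀDψ`, a ratio bounded by the largest relative degree of `E`.
-/

section SymmetricPencil

open Matrix Filter Topology

variable {V : Type*} [Fintype V]

lemma eigenvalue_sub_mul_dotProduct {R : Type*} [CommRing R] {A₁ A₂ M₁ M₂ : Matrix V V R}
    (hA₁ : A₁.IsSymm) (hM₁ : M₁.IsSymm) {a₁ a₂ : R} {u v : V → R}
    (hu : A₁ *ᵥ u = a₁ • M₁ *ᵥ u) (hv : A₂ *ᵥ v = a₂ • M₂ *ᵥ v) :
    (a₁ - a₂) * (u ⬝ᵥ M₂ *ᵥ v) = u ⬝ᵥ ((A₁ - A₂) - a₁ • (M₁ - M₂)) *ᵥ v := by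
  have hu' : u ⬝ᵥ A₁ *ᵥ v = a₁ * (u ⬝ᵥ M₁ *ᵥ v) := by
    rw [← hA₁.eq, dotProduct_transpose_mulVec, hu, dotProduct_smul, smul_eq_mul,
      ← dotProduct_transpose_mulVec, hM₁.eq]
  have hv' : u ⬝ᵥ A₂ *ᵥ v = a₂ * (u ⬝ᵥ M₂ *ᵥ v) := by
    rw [hv, dotProduct_smul, smul_eq_mul]
  simp only [sub_mulVec, smul_mulVec, dotProduct_sub, dotProduct_smul, smul_eq_mul, hu', hv']
  ring

lemma tendsto_dotProduct_mulVec {ι R : Type*} [TopologicalSpace R] [NonUnitalNonAssocSemiring R]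
    [ContinuousAdd R] [ContinuousMul R] {l : Filter ι} {u v : ι → V → R} {A : ι → Matrix V V R}
    {u₀ v₀ : V → R} {A₀ : Matrix V V R} (hu : Tendsto u l (𝓝 u₀)) (hA : Tendsto A l (𝓝 A₀))
    (hv : Tendsto v l (𝓝 v₀)) :
    Tendsto (fun i => u i ⬝ᵥ A i *ᵥ v i) l (𝓝 (u₀ ⬝ᵥ A₀ *ᵥ v₀)) := by
  have hform : Continuous fun p : (V → R) × Matrix V V R × (V → R) => p.1 ⬝ᵥ p.2.1 *ᵥ p.2.2 :=
    continuous_fst.dotProduct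
      ((continuous_fst.comp continuous_snd).matrix_mulVec (continuous_snd.comp continuous_snd))
  exact (hform.tendsto (u₀, A₀, v₀)).comp (hu.prodMk_nhds (hA.prodMk_nhds hv))

lemma continuousWithinAt_eigenvalue {X K : Type*} [TopologicalSpace X] [Field K]
    [TopologicalSpace K] [IsTopologicalDivisionRing K] [T1Space K] {A M : X → Matrix V V K}
    {lam : X → K} {ψ : X → V → K} {S : Set X} {t : X} (hA : ContinuousWithinAt A S t)
    (hM : ContinuousWithinAt M S t) (hψ : ContinuousWithinAt ψ S t)
    (heig : ∀ s ∈ S, A s *ᵥ ψ s = lam s • M s *ᵥ ψ s) (ht : t ∈ S)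
    (hne : ψ t ⬝ᵥ M t *ᵥ ψ t ≠ 0) : ContinuousWithinAt lam S t := by
  have hnum : ContinuousWithinAt (fun s => ψ s ⬝ᵥ A s *ᵥ ψ s) S t :=
    tendsto_dotProduct_mulVec hψ hA hψ
  have hden : ContinuousWithinAt (fun s => ψ s ⬝ᵥ M s *ᵥ ψ s) S t :=
    tendsto_dotProduct_mulVec hψ hM hψ
  have hrayleigh : ∀ s ∈ S, ψ s ⬝ᵥ M s *ᵥ ψ s ≠ 0 →
      lam s = (ψ s ⬝ᵥ A s *ᵥ ψ s) / (ψ s ⬝ᵥ M s *ᵥ ψ s) := fun s hs hs₀ => by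
    rw [heig s hs, dotProduct_smul, smul_eq_mul, mul_div_cancel_right₀ _ hs₀]
  refine (hnum.div hden hne).congr_of_eventuallyEq ?_ (hrayleigh t ht hne)
  filter_upwards [self_mem_nhdsWithin, hden.eventually_ne hne] with s hs hs₀
  exact hrayleigh s hs hs₀

lemma tendsto_inv_smul_sub_of_hasDerivWithinAt_apply {𝕜 : Type*} [NontriviallyNormedField 𝕜]
    {m n : Type*} {A : 𝕜 → Matrix m n 𝕜} {A' : Matrix m n 𝕜} {S : Set 𝕜} {t : 𝕜}
    (hA : ∀ i j, HasDerivWithinAt (fun s => A s i j) (A' i j) S t) :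
    Tendsto (fun s => (s - t)⁻¹ • (A s - A t)) (𝓝[S \ {t}] t) (𝓝 A') :=
  tendsto_pi_nhds.2 fun i => tendsto_pi_nhds.2 fun j =>
    hasDerivWithinAt_iff_tendsto_slope.1 (hA i j)

theorem hasDerivWithinAt_eigenvalue {𝕜 : Type*} [NontriviallyNormedField 𝕜]
    {A M : 𝕜 → Matrix V V 𝕜} {A' M' : Matrix V V 𝕜} {lam : 𝕜 → 𝕜} {ψ : 𝕜 → V → 𝕜}
    {S : Set 𝕜} {t : 𝕜} (hAsymm : ∀ s ∈ S, (A s).IsSymm) (hMsymm : ∀ s ∈ S, (M s).IsSymm)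
    (hA : ∀ i j, HasDerivWithinAt (fun s => A s i j) (A' i j) S t)
    (hM : ∀ i j, HasDerivWithinAt (fun s => M s i j) (M' i j) S t)
    (hψ : ContinuousWithinAt ψ S t) (heig : ∀ s ∈ S, A s *ᵥ ψ s = lam s • M s *ᵥ ψ s)
    (ht : t ∈ S) (hne : ψ t ⬝ᵥ M t *ᵥ ψ t ≠ 0) :
    HasDerivWithinAt lam
      ((ψ t ⬝ᵥ (A' - lam t • M') *ᵥ ψ t) / (ψ t ⬝ᵥ M t *ᵥ ψ t)) S t := by
  have hlam : ContinuousWithinAt lam S t :=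
    continuousWithinAt_eigenvalue
      (tendsto_pi_nhds.2 fun i => tendsto_pi_nhds.2 fun j => (hA i j).continuousWithinAt)
      (tendsto_pi_nhds.2 fun i => tendsto_pi_nhds.2 fun j => (hM i j).continuousWithinAt)
      hψ heig ht hne
  have hle : 𝓝[S \ {t}] t ≤ 𝓝[S] t := nhdsWithin_mono t Set.sdiff_subset
  have hlam' : Tendsto lam (𝓝[S \ {t}] t) (𝓝 (lam t)) := hlam.mono_left hle
  have hψ' : Tendsto ψ (𝓝[S \ {t}] t) (𝓝 (ψ t)) := hψ.mono_left hle
  have hquot : Tendsto (fun s => (s - t)⁻¹ • (A s - A t) - lam s • ((s - t)⁻¹ • (M s - M t)))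
      (𝓝[S \ {t}] t) (𝓝 (A' - lam t • M')) :=
    (tendsto_inv_smul_sub_of_hasDerivWithinAt_apply hA).sub
      (hlam'.smul (tendsto_inv_smul_sub_of_hasDerivWithinAt_apply hM))
  have hnum := tendsto_dotProduct_mulVec hψ' hquot (tendsto_const_nhds (x := ψ t))
  have hden := tendsto_dotProduct_mulVec hψ' (tendsto_const_nhds (x := M t))
    (tendsto_const_nhds (x := ψ t))
  refine hasDerivWithinAt_iff_tendsto_slope.2 ((hnum.div hden hne).congr' ?_)
  filter_upwards [self_mem_nhdsWithin, hden.eventually_ne hne] with s hs hs₀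
  have hdiff := eigenvalue_sub_mul_dotProduct (hAsymm s hs.1) (hMsymm s hs.1) (heig s hs.1)
    (heig t ht)
  rw [Pi.div_apply, smul_comm (lam s), ← smul_sub, smul_mulVec, dotProduct_smul, ← hdiff,
    slope_def_module, smul_eq_mul, smul_eq_mul, ← mul_assoc, mul_div_cancel_right₀ _ hs₀]

end SymmetricPencil

lemma le_mul_add_mul_of_le_mul {a b r t : ℝ} (ha : 0 ≤ a) (hb : 0 ≤ b) (h : b ≤ r * a)
    (ht : 0 ≤ t) : b ≤ r * (a + t * b) := by
  have hrb : 0 ≤ r * b := by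
    rcases le_or_gt 0 r with hr | hr
    · exact mul_nonneg hr hb
    · have hb_zero : b = 0 := (h.trans (mul_nonpos_of_nonpos_of_nonneg hr.le ha)).antisymm hb
      rw [hb_zero, mul_zero]
  linarith [mul_nonneg ht hrb]

lemma sum_row_le_sum_cross {V : Type*} [Fintype V] {B C : Finset V} (hdisj : Disjoint B C)
    {E : Matrix V V ℝ} (hE : E.IsSymm) (hE₀ : ∀ x y, 0 ≤ E x y)
    (hcross : ∀ x y, ¬((x ∈ B ∧ y ∈ C) ∨ (x ∈ C ∧ y ∈ B)) → E x y = 0) (x : V) :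
    ∑ y, E x y ≤ ∑ z ∈ B, ∑ y ∈ C, E z y := by
  by_cases hxB : x ∈ B
  · have hxC : x ∉ C := Finset.disjoint_left.1 hdisj hxB
    calc ∑ y, E x y = ∑ y ∈ C, E x y :=
          (Finset.sum_subset C.subset_univ fun y _ hy => hcross x y (by tauto)).symm
      _ ≤ ∑ z ∈ B, ∑ y ∈ C, E z y :=
          Finset.single_le_sum (f := fun z => ∑ y ∈ C, E z y)
            (fun z _ => Finset.sum_nonneg fun y _ => hE₀ z y) hxB
  · calc ∑ y, E x y = ∑ z ∈ B, E x z :=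
          (Finset.sum_subset B.subset_univ fun y _ hy => hcross x y (by tauto)).symm
      _ ≤ ∑ z ∈ B, ∑ y ∈ C, E z y := by
          refine Finset.sum_le_sum fun z _ => ?_
          by_cases hxC : x ∈ C
          · rw [← hE.apply]
            exact Finset.single_le_sum (f := E z) (fun y _ => hE₀ z y) hxC
          · rw [hcross x z (by tauto)]
            exact Finset.sum_nonneg fun y _ => hE₀ z y

section DegreeMatrix

open Matrix

variable {V : Type*} [Fintype V] [DecidableEq V]

/-- The diagonal degree matrix `D` of a weight matrix: the degree of a vertex is its row sum. A
weight `W x x` therefore counts once in the degree of `x`. -/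
def degreeMatrix {R : Type*} [AddCommMonoid R] (W : Matrix V V R) : Matrix V V R :=
  diagonal fun x => ∑ y, W x y

lemma degreeMatrix_isSymm {R : Type*} [AddCommMonoid R] (W : Matrix V V R) :
    (degreeMatrix W).IsSymm :=
  isSymm_diagonal _

lemma degreeMatrix_add_smul {R : Type*} [Semiring R] (W E : Matrix V V R) (t : R) :
    degreeMatrix (W + t • E) = degreeMatrix W + t • degreeMatrix E := by
  ext x y
  by_cases hxy : x = y <;>
    simp [degreeMatrix, hxy, Finset.sum_add_distrib, Finset.mul_sum]

lemma degreeMatrix_mulVec_apply {R : Type*} [NonUnitalNonAssocSemiring R] (W : Matrix V V R)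
    (v : V → R) (x : V) : (degreeMatrix W *ᵥ v) x = (∑ y, W x y) * v x :=
  mulVec_diagonal _ _ _

lemma dotProduct_degreeMatrix_mulVec {R : Type*} [NonUnitalSemiring R] (W : Matrix V V R)
    (u v : V → R) : u ⬝ᵥ degreeMatrix W *ᵥ v = ∑ x, u x * (∑ y, W x y) * v x := by
  simp only [dotProduct, degreeMatrix_mulVec_apply, mul_assoc]

lemma dotProduct_degreeMatrix_mulVec_self_nonneg {W : Matrix V V ℝ} (hW₀ : ∀ x y, 0 ≤ W x y)
    (v : V → ℝ) : 0 ≤ v ⬝ᵥ degreeMatrix W *ᵥ v := by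
  rw [dotProduct_degreeMatrix_mulVec]
  refine Finset.sum_nonneg fun x _ => ?_
  rw [mul_right_comm]
  exact mul_nonneg (mul_self_nonneg _) (Finset.sum_nonneg fun y _ => hW₀ x y)

lemma dotProduct_degreeMatrix_mulVec_self_le {E W : Matrix V V ℝ} {r : ℝ}
    (h : ∀ x, ∑ y, E x y ≤ r * ∑ y, W x y) (v : V → ℝ) :
    v ⬝ᵥ degreeMatrix E *ᵥ v ≤ r * (v ⬝ᵥ degreeMatrix W *ᵥ v) := by
  rw [dotProduct_degreeMatrix_mulVec, dotProduct_degreeMatrix_mulVec, Finset.mul_sum]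
  refine Finset.sum_le_sum fun x _ => ?_
  calc v x * (∑ y, E x y) * v x = (∑ y, E x y) * v x ^ 2 := by ring
    _ ≤ (r * ∑ y, W x y) * v x ^ 2 := by gcongr; exact h x
    _ = r * (v x * (∑ y, W x y) * v x) := by ring

lemma sum_mul_add_mul_sq {R : Type*} [CommRing R] {E : Matrix V V R} (hE : E.IsSymm) (ε : R)
    (v : V → R) :
    ∑ x, ∑ y, E x y * (v x + ε * v y) ^ 2 =
      (1 + ε ^ 2) * (v ⬝ᵥ degreeMatrix E *ᵥ v) + 2 * ε * (v ⬝ᵥ E *ᵥ v) := by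
  have hrow : v ⬝ᵥ degreeMatrix E *ᵥ v = ∑ x, ∑ y, E x y * v x ^ 2 := by
    rw [dotProduct_degreeMatrix_mulVec]
    refine Finset.sum_congr rfl fun x _ => ?_
    rw [← Finset.sum_mul]
    ring
  have hcol : v ⬝ᵥ degreeMatrix E *ᵥ v = ∑ x, ∑ y, E x y * v y ^ 2 := by
    rw [hrow, Finset.sum_comm]
    simp only [hE.apply]
  have hquad : v ⬝ᵥ E *ᵥ v = ∑ x, ∑ y, E x y * (v x * v y) := by
    simp only [dotProduct, mulVec, Finset.mul_sum, mul_left_comm]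
  rw [add_mul, one_mul, hquad]
  nth_rw 1 [hrow]
  rw [hcol]
  simp only [Finset.mul_sum, ← Finset.sum_add_distrib]
  exact Finset.sum_congr rfl fun x _ => Finset.sum_congr rfl fun y _ => by ring

lemma abs_dotProduct_mulVec_self_le {E : Matrix V V ℝ} (hE : E.IsSymm) (hE₀ : ∀ x y, 0 ≤ E x y)
    (v : V → ℝ) : |v ⬝ᵥ E *ᵥ v| ≤ v ⬝ᵥ degreeMatrix E *ᵥ v := by
  have hnonneg (ε : ℝ) : 0 ≤ ∑ x, ∑ y, E x y * (v x + ε * v y) ^ 2 :=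
    Finset.sum_nonneg fun x _ => Finset.sum_nonneg fun y _ => mul_nonneg (hE₀ x y) (sq_nonneg _)
  have hplus := sum_mul_add_mul_sq hE 1 v ▸ hnonneg 1
  have hminus := sum_mul_add_mul_sq hE (-1) v ▸ hnonneg (-1)
  exact abs_le.2 ⟨by linarith, by linarith⟩

lemma abs_eigenvalue_le_one {W : Matrix V V ℝ} (hW : W.IsSymm) (hW₀ : ∀ x y, 0 ≤ W x y)
    {μ : ℝ} {v : V → ℝ} (heig : W *ᵥ v = μ • degreeMatrix W *ᵥ v)
    (hne : v ⬝ᵥ degreeMatrix W *ᵥ v ≠ 0) : |μ| ≤ 1 := by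
  have hle := abs_dotProduct_mulVec_self_le hW hW₀ v
  have hpos : 0 < v ⬝ᵥ degreeMatrix W *ᵥ v :=
    (dotProduct_degreeMatrix_mulVec_self_nonneg hW₀ v).lt_of_ne' hne
  rw [heig, dotProduct_smul, smul_eq_mul, abs_mul, abs_of_pos hpos] at hle
  exact le_of_mul_le_mul_right (by rwa [one_mul]) hpos

lemma abs_dotProduct_sub_smul_degreeMatrix_mulVec_self_le {E : Matrix V V ℝ} (hE : E.IsSymm)
    (hE₀ : ∀ x y, 0 ≤ E x y) (a : ℝ) (v : V → ℝ) :
    |v ⬝ᵥ (E - a • degreeMatrix E) *ᵥ v| ≤ (1 + |a|) * (v ⬝ᵥ degreeMatrix E *ᵥ v) := by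
  have hle := abs_dotProduct_mulVec_self_le hE hE₀ v
  rw [sub_mulVec, smul_mulVec, dotProduct_sub, dotProduct_smul, smul_eq_mul]
  calc |v ⬝ᵥ E *ᵥ v - a * (v ⬝ᵥ degreeMatrix E *ᵥ v)|
      ≤ |v ⬝ᵥ E *ᵥ v| + |a * (v ⬝ᵥ degreeMatrix E *ᵥ v)| := abs_sub _ _
    _ ≤ v ⬝ᵥ degreeMatrix E *ᵥ v + |a| * (v ⬝ᵥ degreeMatrix E *ᵥ v) := by
        rw [abs_mul, abs_of_nonneg (dotProduct_degreeMatrix_mulVec_self_nonneg hE₀ v)]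
        gcongr
    _ = (1 + |a|) * (v ⬝ᵥ degreeMatrix E *ᵥ v) := by ring

lemma abs_dotProduct_mulVec_div_dotProduct_degreeMatrix_le {W E : Matrix V V ℝ}
    (hW : W.IsSymm) (hW₀ : ∀ x y, 0 ≤ W x y) (hE : E.IsSymm) (hE₀ : ∀ x y, 0 ≤ E x y) {r : ℝ}
    (hr : ∀ x, ∑ y, E x y ≤ r * ∑ y, W x y) {μ : ℝ} {v : V → ℝ}
    (heig : W *ᵥ v = μ • degreeMatrix W *ᵥ v) (hne : v ⬝ᵥ degreeMatrix W *ᵥ v ≠ 0) :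
    |(v ⬝ᵥ (E - μ • degreeMatrix E) *ᵥ v) / (v ⬝ᵥ degreeMatrix W *ᵥ v)| ≤ 2 * r := by
  have hμ : |μ| ≤ 1 := abs_eigenvalue_le_one hW hW₀ heig hne
  have hpos : 0 < v ⬝ᵥ degreeMatrix W *ᵥ v :=
    (dotProduct_degreeMatrix_mulVec_self_nonneg hW₀ v).lt_of_ne' hne
  have hE_nonneg := dotProduct_degreeMatrix_mulVec_self_nonneg hE₀ v
  rw [abs_div, abs_of_pos hpos, div_le_iff₀ hpos]
  calc |v ⬝ᵥ (E - μ • degreeMatrix E) *ᵥ v|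
      ≤ (1 + |μ|) * (v ⬝ᵥ degreeMatrix E *ᵥ v) :=
        abs_dotProduct_sub_smul_degreeMatrix_mulVec_self_le hE hE₀ μ v
    _ ≤ 2 * (v ⬝ᵥ degreeMatrix E *ᵥ v) := by gcongr; linarith
    _ ≤ 2 * (r * (v ⬝ᵥ degreeMatrix W *ᵥ v)) := by
        gcongr
        exact dotProduct_degreeMatrix_mulVec_self_le hr v
    _ = 2 * r * (v ⬝ᵥ degreeMatrix W *ᵥ v) := by ring

theorem eigenvalue_stable_deformation_general {W₀ E : Matrix V V ℝ}
    (hW₀symm : W₀.IsSymm) (hW₀ : ∀ x y, 0 ≤ W₀ x y) (hEsymm : E.IsSymm)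
    (hE₀ : ∀ x y, 0 ≤ E x y) {r : ℝ} (hr : ∀ x, ∑ y, E x y ≤ r * ∑ y, W₀ x y)
    {S : Set ℝ} (hS : Convex ℝ S) (hS₀ : S ⊆ Set.Ici 0) {lam : ℝ → ℝ} {ψ : ℝ → V → ℝ}
    (hψ : ContinuousOn ψ S)
    (heig : ∀ t ∈ S, (W₀ + t • E) *ᵥ ψ t = lam t • degreeMatrix (W₀ + t • E) *ᵥ ψ t)
    (hne : ∀ t ∈ S, ψ t ⬝ᵥ degreeMatrix (W₀ + t • E) *ᵥ ψ t ≠ 0)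
    {s t : ℝ} (hs : s ∈ S) (ht : t ∈ S) : |lam t - lam s| ≤ 2 * r * |t - s| := by
  have hderiv_add_smul (W F : Matrix V V ℝ) (τ : ℝ) (x y : V) :
      HasDerivWithinAt (fun σ => (W + σ • F) x y) (F x y) S τ := by
    simpa using ((hasDerivWithinAt_id τ S).mul_const (F x y)).const_add (W x y)
  have hderiv (τ : ℝ) (hτ : τ ∈ S) : HasDerivWithinAt lam
      ((ψ τ ⬝ᵥ (E - lam τ • degreeMatrix E) *ᵥ ψ τ) /
        (ψ τ ⬝ᵥ degreeMatrix (W₀ + τ • E) *ᵥ ψ τ)) S τ := by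
    refine hasDerivWithinAt_eigenvalue (M := fun σ => degreeMatrix (W₀ + σ • E))
      (fun σ _ => hW₀symm.add (hEsymm.smul σ)) (fun σ _ => degreeMatrix_isSymm _)
      (hderiv_add_smul W₀ E τ) ?_ (hψ τ hτ) heig hτ (hne τ hτ)
    simpa only [degreeMatrix_add_smul] using
      hderiv_add_smul (degreeMatrix W₀) (degreeMatrix E) τ
  have hrdeg (τ : ℝ) (hτ : τ ∈ S) (x : V) : ∑ y, E x y ≤ r * ∑ y, (W₀ + τ • E) x y := by
    simpa [Finset.sum_add_distrib, Finset.mul_sum] using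
      le_mul_add_mul_of_le_mul (Finset.sum_nonneg fun y _ => hW₀ x y)
        (Finset.sum_nonneg fun y _ => hE₀ x y) (hr x) (hS₀ hτ)
  have hbound (τ : ℝ) (hτ : τ ∈ S) :
      |(ψ τ ⬝ᵥ (E - lam τ • degreeMatrix E) *ᵥ ψ τ) /
        (ψ τ ⬝ᵥ degreeMatrix (W₀ + τ • E) *ᵥ ψ τ)| ≤ 2 * r :=
    abs_dotProduct_mulVec_div_dotProduct_degreeMatrix_le (hW₀symm.add (hEsymm.smul τ))
      (fun x y => add_nonneg (hW₀ x y) (mul_nonneg (hS₀ hτ) (hE₀ x y))) hEsymm hE₀ (hrdeg τ hτ)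
      (heig τ hτ) (hne τ hτ)
  exact hS.norm_image_sub_le_of_norm_hasDerivWithin_le hderiv hbound hs ht

end DegreeMatrix

/-- Stable deformation of the eigenvalues of `P(t) = D(t)⁻¹W(t)`,
`W(t) = W0 + tE`: if for each `k` there are differentiable `λ_k`, `ψ_k` on `[0,1]` with
`W(t)ψ_k(t) = λ_k(t)D(t)ψ_k(t)`, `D(t)`-orthonormality, and `|λ_k(t)| ≤ 1`, then
`|λ_k(t) − λ_k(0)| ≤ (4 C_conn/d0low)·t` for every `k` and `t ∈ [0,1]`. -/
theorem eigenvalue_stable_deformation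
    {V : Type*} [Fintype V] [DecidableEq V] [Nonempty V]
    (B C : Finset V) (hdisj : Disjoint B C) (hunion : B ∪ C = Finset.univ)
    (hBne : B.Nonempty) (hCne : C.Nonempty)
    (W0 E : Matrix V V ℝ)
    (hW0symm : W0.IsSymm) (hW0nonneg : ∀ x y, 0 ≤ W0 x y)
    (hW0cross : ∀ x y, ((x ∈ B ∧ y ∈ C) ∨ (x ∈ C ∧ y ∈ B)) → W0 x y = 0)
    (hEsymm : E.IsSymm) (hEnonneg : ∀ x y, 0 ≤ E x y)
    (hEcross : ∀ x y, ¬((x ∈ B ∧ y ∈ C) ∨ (x ∈ C ∧ y ∈ B)) → E x y = 0)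
    (Cconn : ℝ) (hCconn : Cconn = ∑ x ∈ B, ∑ y ∈ C, E x y)
    (d0low : ℝ)
    (hd0low : d0low = Finset.univ.inf' Finset.univ_nonempty (fun x => ∑ y, W0 x y))
    (hd0pos : 0 < d0low)
    (lam : V → ℝ → ℝ) (ψ : V → ℝ → V → ℝ)
    (hlamdiff : ∀ k, DifferentiableOn ℝ (lam k) (Set.Icc (0 : ℝ) 1))
    (hψdiff : ∀ k x, DifferentiableOn ℝ (fun s => ψ k s x) (Set.Icc (0 : ℝ) 1))
    (heig : ∀ k, ∀ t ∈ Set.Icc (0 : ℝ) 1, ∀ x,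
      ∑ y, (W0 x y + t * E x y) * ψ k t y
        = lam k t * ((∑ y, (W0 x y + t * E x y)) * ψ k t x))
    (horth : ∀ t ∈ Set.Icc (0 : ℝ) 1, ∀ k l,
      ∑ x, ψ k t x * (∑ y, (W0 x y + t * E x y)) * ψ l t x = if k = l then 1 else 0)
    (hlambound : ∀ k, ∀ t ∈ Set.Icc (0 : ℝ) 1, |lam k t| ≤ 1) :
    ∀ k, ∀ t ∈ Set.Icc (0 : ℝ) 1, |lam k t - lam k 0| ≤ (4 * Cconn / d0low) * t := by
  intro k t ht
  have ht₀ : 0 ≤ t := ht.1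
  have hCconn₀ : 0 ≤ Cconn :=
    hCconn ▸ Finset.sum_nonneg fun x _ => Finset.sum_nonneg fun y _ => hEnonneg x y
  have hreldeg (x : V) : ∑ y, E x y ≤ Cconn / d0low * ∑ y, W0 x y :=
    calc ∑ y, E x y ≤ Cconn := hCconn ▸ sum_row_le_sum_cross hdisj hEsymm hEnonneg hEcross x
      _ = Cconn / d0low * d0low := (div_mul_cancel₀ _ hd0pos.ne').symm
      _ ≤ Cconn / d0low * ∑ y, W0 x y := by
        gcongr
        exact hd0low ▸ Finset.inf'_le _ (Finset.mem_univ x)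
  calc |lam k t - lam k 0| ≤ 2 * (Cconn / d0low) * |t - 0| :=
        eigenvalue_stable_deformation_general hW0symm hW0nonneg hEsymm hEnonneg hreldeg
          (convex_Icc 0 1) Set.Icc_subset_Ici_self
          (continuousOn_pi.2 fun x => (hψdiff k x).continuousOn)
          (fun s hs => funext fun x => (heig k s hs x).trans
            (congrArg _ (degreeMatrix_mulVec_apply (W0 + s • E) (ψ k s) x).symm))
          (fun s hs => by simp [dotProduct_degreeMatrix_mulVec, horth s hs k k])
          (Set.left_mem_Icc.2 zero_le_one) ht
    _ ≤ 4 * Cconn / d0low * t := by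
        rw [sub_zero, abs_of_nonneg ht₀, ← mul_div_assoc]
        gcongr
        norm_num
end

section
/- Let Ψ be an n×n real matrix whose columns ψ_1,…,ψ_n satisfy ΨᵀDΨ = Id, where D is diagonal with diagonal entries d(x) ≥ d0_low > 0. Let D_E be a diagonal matrix with |D_E(y,y)| ≤ Σ_{z} E(y,z) for a symmetric nonnegative matrix E supported only on cross entries of a partition V = B ∪ C, and set C_conn = Σ_{y∈B,z∈C}E(y,z). For a subset I of indices put S(y) = Σ_{k∈I} ψ_k(y)². Then for every x∈V, |Σ_{k∈I} Σ_{j∈I} (ψ_jᵀ D_E ψ_k) ψ_k(x) ψ_j(x)| ≤ S(x) · (2·C_conn/d0_low). -/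
open Finset

/-!
With the kernel `K(x, y) = ∑_{k ∈ I} ψ_k(x) ψ_k(y)`, the double sum to be bounded is
`∑_y D_E(y) K(x, y)²`, and Cauchy–Schwarz gives `K(x, y)² ≤ S(x) S(y)`. The vectors
`√d · ψ_k` are orthonormal in Euclidean space, so Bessel's inequality for the coordinate vector
at `y` reads `d(y) S(y) ≤ 1`. What remains is `∑_y |D_E(y)|`, at most the total mass of `E`, and
each of the two cross blocks carries the mass `C_conn`.
-/

section KernelForm

variable {V ι R : Type*} [Fintype V]

lemma sum_sum_weighted_inner_mul_mul_eq_sum_mul_kernel_sq [CommSemiring R]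
    (a : V → R) (ψ : ι → V → R) (I : Finset ι) (x : V) :
    ∑ k ∈ I, ∑ j ∈ I, (∑ y, ψ j y * a y * ψ k y) * ψ k x * ψ j x =
      ∑ y, a y * (∑ k ∈ I, ψ k x * ψ k y) ^ 2 := by
  simp_rw [sq, sum_mul_sum, mul_sum, sum_mul]
  rw [sum_comm (s := univ)]
  refine sum_congr rfl fun k _ => ?_
  rw [sum_comm (s := univ)]
  exact sum_congr rfl fun j _ => sum_congr rfl fun y _ => by ring

lemma abs_sum_sum_weighted_inner_mul_mul_le [CommRing R] [LinearOrder R] [IsStrictOrderedRing R]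
    (a : V → R) (ψ : ι → V → R) (I : Finset ι) (x : V) :
    |∑ k ∈ I, ∑ j ∈ I, (∑ y, ψ j y * a y * ψ k y) * ψ k x * ψ j x| ≤
      (∑ k ∈ I, ψ k x ^ 2) * ∑ y, |a y| * ∑ k ∈ I, ψ k y ^ 2 := by
  calc |∑ k ∈ I, ∑ j ∈ I, (∑ y, ψ j y * a y * ψ k y) * ψ k x * ψ j x|
      = |∑ y, a y * (∑ k ∈ I, ψ k x * ψ k y) ^ 2| := by
        rw [sum_sum_weighted_inner_mul_mul_eq_sum_mul_kernel_sq]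
    _ ≤ ∑ y, |a y| * (∑ k ∈ I, ψ k x * ψ k y) ^ 2 := by
        refine (abs_sum_le_sum_abs _ _).trans_eq (sum_congr rfl fun y _ => ?_)
        rw [abs_mul, abs_of_nonneg (sq_nonneg (∑ k ∈ I, ψ k x * ψ k y))]
    _ ≤ ∑ y, |a y| * ((∑ k ∈ I, ψ k x ^ 2) * ∑ k ∈ I, ψ k y ^ 2) := by
        gcongr with y
        exact sum_mul_sq_le_sq_mul_sq I (ψ · x) (ψ · y)
    _ = (∑ k ∈ I, ψ k x ^ 2) * ∑ y, |a y| * ∑ k ∈ I, ψ k y ^ 2 := by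
        rw [mul_sum]
        exact sum_congr rfl fun y _ => mul_left_comm _ _ _

end KernelForm

section WeightedOrthonormal

variable {V ι : Type*} [Fintype V] [DecidableEq ι] {d : V → ℝ} {ψ : ι → V → ℝ}

lemma orthonormal_toLp_sqrt_weight_mul (hd : ∀ x, 0 ≤ d x)
    (horth : ∀ k l, ∑ x, ψ k x * d x * ψ l x = if k = l then 1 else 0) :
    Orthonormal ℝ fun k => WithLp.toLp 2 fun x => √(d x) * ψ k x := by
  rw [orthonormal_iff_ite]
  intro k l
  rw [← horth k l, PiLp.inner_apply]
  refine sum_congr rfl fun x _ => ?_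
  calc √(d x) * ψ l x * (√(d x) * ψ k x)
      = ψ k x * (√(d x) * √(d x)) * ψ l x := by ring
    _ = ψ k x * d x * ψ l x := by rw [Real.mul_self_sqrt (hd x)]

lemma weight_mul_sum_sq_le_one (hd : ∀ x, 0 ≤ d x)
    (horth : ∀ k l, ∑ x, ψ k x * d x * ψ l x = if k = l then 1 else 0)
    (I : Finset ι) (y : V) : d y * ∑ k ∈ I, ψ k y ^ 2 ≤ 1 := by
  classical
  have bessel := (orthonormal_toLp_sqrt_weight_mul hd horth).sum_inner_products_le
    (s := I) (EuclideanSpace.single y 1)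
  simpa [EuclideanSpace.inner_single_right, mul_pow, Real.sq_sqrt (hd y), ← mul_sum] using bessel

lemma sum_sq_le_inv_of_le_weight {d₀ : ℝ} (hd₀ : 0 < d₀) (hd : ∀ x, d₀ ≤ d x)
    (horth : ∀ k l, ∑ x, ψ k x * d x * ψ l x = if k = l then 1 else 0)
    (I : Finset ι) (y : V) : ∑ k ∈ I, ψ k y ^ 2 ≤ d₀⁻¹ := by
  have hS : 0 ≤ ∑ k ∈ I, ψ k y ^ 2 := sum_nonneg fun _ _ => sq_nonneg _
  rw [← one_div, le_div_iff₀' hd₀]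
  exact (mul_le_mul_of_nonneg_right (hd y) hS).trans
    (weight_mul_sum_sq_le_one (fun x => hd₀.le.trans (hd x)) horth I y)

end WeightedOrthonormal

lemma sum_sum_eq_two_nsmul_of_isSymm_of_cross_support {V M : Type*} [Fintype V] [AddCommMonoid M]
    {B C : Finset V} (hdisj : Disjoint B C) {E : Matrix V V M} (hEsymm : E.IsSymm)
    (hEcross : ∀ x y, ¬((x ∈ B ∧ y ∈ C) ∨ (x ∈ C ∧ y ∈ B)) → E x y = 0) :
    ∑ y, ∑ z, E y z = 2 • ∑ y ∈ B, ∑ z ∈ C, E y z := by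
  have blocks_disjoint : Disjoint (B ×ˢ C) (C ×ˢ B) := disjoint_product.mpr (.inl hdisj)
  have transpose_block : ∑ y ∈ C, ∑ z ∈ B, E y z = ∑ y ∈ B, ∑ z ∈ C, E y z :=
    sum_comm.trans (sum_congr rfl fun y _ => sum_congr rfl fun z _ => hEsymm.apply y z)
  calc ∑ y, ∑ z, E y z
      = ∑ p : V × V, E p.1 p.2 := (Fintype.sum_prod_type' E).symm
    _ = ∑ p ∈ (B ×ˢ C).disjUnion (C ×ˢ B) blocks_disjoint, E p.1 p.2 :=
        (sum_subset (subset_univ _) fun p _ hp => hEcross p.1 p.2 <| by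
          simpa only [mem_disjUnion, mem_product] using hp).symm
    _ = 2 • ∑ y ∈ B, ∑ z ∈ C, E y z := by
        rw [sum_disjUnion, sum_product, sum_product, transpose_block, two_nsmul]

theorem embedding_norm_diagonal_term_bound_general
    {V ι : Type*} [Fintype V] [DecidableEq ι]
    {B C : Finset V} (hdisj : Disjoint B C) {E : Matrix V V ℝ} (hEsymm : E.IsSymm)
    (hEcross : ∀ x y, ¬((x ∈ B ∧ y ∈ C) ∨ (x ∈ C ∧ y ∈ B)) → E x y = 0)
    {Cconn : ℝ} (hCconn : Cconn = ∑ y ∈ B, ∑ z ∈ C, E y z)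
    {d : V → ℝ} {d0low : ℝ} (hd0pos : 0 < d0low) (hdlow : ∀ x, d0low ≤ d x)
    {ψ : ι → V → ℝ}
    (horth : ∀ k l, ∑ x, ψ k x * d x * ψ l x = if k = l then 1 else 0)
    {DE : V → ℝ} (hDE : ∀ y, |DE y| ≤ ∑ z, E y z)
    (I : Finset ι) (x : V) :
    |∑ k ∈ I, ∑ j ∈ I, (∑ y, ψ j y * DE y * ψ k y) * ψ k x * ψ j x|
      ≤ (∑ k ∈ I, (ψ k x) ^ 2) * (2 * Cconn / d0low) := by
  have mass_eq : ∑ y, ∑ z, E y z = 2 * Cconn := by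
    rw [sum_sum_eq_two_nsmul_of_isSymm_of_cross_support hdisj hEsymm hEcross, hCconn,
      nsmul_eq_mul, Nat.cast_ofNat]
  refine (abs_sum_sum_weighted_inner_mul_mul_le DE ψ I x).trans ?_
  gcongr
  calc ∑ y, |DE y| * ∑ k ∈ I, ψ k y ^ 2
      ≤ ∑ y, (∑ z, E y z) * d0low⁻¹ :=
        sum_le_sum fun y _ => mul_le_mul (hDE y)
          (sum_sq_le_inv_of_le_weight hd0pos hdlow horth I y)
          (sum_nonneg fun _ _ => sq_nonneg _) ((abs_nonneg _).trans (hDE y))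
    _ = 2 * Cconn / d0low := by rw [← sum_mul, mass_eq, div_eq_mul_inv]

/-- Bound on the diagonal (within-`I`) term of the evolution of the spectral
embedding norm: with a complete `D`-orthonormal family `ψ_k` (`d(x) ≥ d0low > 0`), a
diagonal matrix `D_E` dominated entrywise by the row sums of the cross-supported matrix `E`,
and `S(y) = ∑_{k∈I} ψ_k(y)²`,
`|∑_{k,j∈I} (ψ_jᵀD_Eψ_k) ψ_k(x)ψ_j(x)| ≤ S(x)·(2 C_conn/d0low)` for every `x`. -/
theorem embedding_norm_diagonal_term_bound
    {V : Type*} [Fintype V] [DecidableEq V]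
    (B C : Finset V) (hdisj : Disjoint B C) (hunion : B ∪ C = Finset.univ)
    (hBne : B.Nonempty) (hCne : C.Nonempty)
    (E : Matrix V V ℝ) (hEsymm : E.IsSymm) (hEnonneg : ∀ x y, 0 ≤ E x y)
    (hEcross : ∀ x y, ¬((x ∈ B ∧ y ∈ C) ∨ (x ∈ C ∧ y ∈ B)) → E x y = 0)
    (Cconn : ℝ) (hCconn : Cconn = ∑ y ∈ B, ∑ z ∈ C, E y z)
    (d : V → ℝ) (d0low : ℝ) (hd0pos : 0 < d0low) (hdlow : ∀ x, d0low ≤ d x)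
    -- complete D-orthonormal family (a square matrix of columns, indexed by k : V)
    (ψ : V → V → ℝ)
    (horth : ∀ k l, ∑ x, ψ k x * d x * ψ l x = if k = l then 1 else 0)
    (DE : V → ℝ) (hDE : ∀ y, |DE y| ≤ ∑ z, E y z)
    (I : Finset V) :
    ∀ x, |∑ k ∈ I, ∑ j ∈ I, (∑ y, ψ j y * DE y * ψ k y) * ψ k x * ψ j x|
      ≤ (∑ k ∈ I, (ψ k x) ^ 2) * (2 * Cconn / d0low) := by
  exact embedding_norm_diagonal_term_bound_general hdisj hEsymm hEcross hCconn hd0pos hdlow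
    horth hDE I
end

section
/- Let Ψ be an n×n real matrix whose columns ψ_1,…,ψ_n satisfy ΨᵀDΨ = Id, where D is diagonal with diagonal entries d(x) ≥ d0_low > 0, and let λ_1,…,λ_n be real numbers. Let E be a symmetric nonnegative matrix supported only on cross entries of a partition V = B ∪ C, with C_conn = Σ_{y∈B,z∈C}E(y,z). Let I be a subset of indices such that |λ_k − λ_j| ≥ Δ > 0 for all k∈I, j∉I, put S(y) = Σ_{k∈I} ψ_k(y)² and S̄ = max_{y∈V} S(y). Then for every x∈V, |2 Σ_{k∈I} Σ_{j∉I} (ψ_jᵀ E ψ_k / (λ_k − λ_j)) ψ_k(x) ψ_j(x)| ≤ (2/Δ) · S̄ · (2·C_conn/d0_low). -/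
open Finset

/-!
Exchanging the order of summation writes the cross term as twice `∑ E y z * T y z`, where `T y z`
is the sum of `(ψ k z * ψ k x) * (ψ j y * ψ j x) / (λ k - λ j)` over `k ∈ I` and `j ∉ I`. Once the
gap is bounded below by `Δ`, the sums over `k` and `j` separate. By AM-GM the first is at most the
maximum of `∑ k ∈ I, ψ k y ^ 2`, and the second is at most `1 / d0low`, because Bessel's inequality
for the point mass at `y` gives `d y * ∑ j ∉ I, ψ j y ^ 2 ≤ 1`. So `T` is bounded uniformly in `y`
and `z`, and what remains is the sum of the entries of `E`, where each cross entry counts twice.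
-/

lemma weight_mul_sum_sq_le_one_of_orthonormal {V K : Type*} [Fintype V] [DecidableEq K] {d : V → ℝ}
    (hd : ∀ x, 0 ≤ d x) {ψ : K → V → ℝ}
    (horth : ∀ k l, ∑ x, ψ k x * d x * ψ l x = if k = l then 1 else 0) (s : Finset K) (y : V) :
    d y * ∑ k ∈ s, ψ k y ^ 2 ≤ 1 := by
  classical
  let v : K → EuclideanSpace ℝ V := fun k => WithLp.toLp 2 fun x => √(d x) * ψ k x
  have hv : Orthonormal ℝ v := by
    refine orthonormal_iff_ite.mpr fun k l => ?_
    rw [← horth k l, PiLp.inner_apply]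
    refine sum_congr rfl fun x _ => ?_
    calc √(d x) * ψ l x * (√(d x) * ψ k x) = √(d x) ^ 2 * (ψ k x * ψ l x) := by ring
      _ = ψ k x * d x * ψ l x := by rw [Real.sq_sqrt (hd x)]; ring
  have bessel := hv.sum_inner_products_le (EuclideanSpace.single y (1 : ℝ)) (s := s)
  simpa [v, EuclideanSpace.inner_single_right, mul_pow, Real.sq_sqrt (hd y), ← mul_sum] using bessel

lemma sum_abs_mul_le_of_sum_sq_le {ι 𝕜 : Type*} [Field 𝕜] [LinearOrder 𝕜] [IsStrictOrderedRing 𝕜]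
    {s : Finset ι} {a b : ι → 𝕜} {M : 𝕜}
    (ha : ∑ i ∈ s, a i ^ 2 ≤ M) (hb : ∑ i ∈ s, b i ^ 2 ≤ M) :
    ∑ i ∈ s, |a i * b i| ≤ M := by
  have amgm : ∑ i ∈ s, 2 * |a i * b i| ≤ ∑ i ∈ s, (a i ^ 2 + b i ^ 2) :=
    sum_le_sum fun i _ => by
      simpa only [abs_mul, sq_abs, mul_assoc] using two_mul_le_add_sq |a i| |b i|
  rw [← mul_sum, sum_add_distrib] at amgm
  linarith

lemma abs_sum_sum_mul_div_le {ι κ 𝕜 : Type*} [Field 𝕜] [LinearOrder 𝕜] [IsStrictOrderedRing 𝕜]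
    {s : Finset ι} {t : Finset κ} (a : ι → 𝕜) (b : κ → 𝕜) {g : ι → κ → 𝕜} {Δ : 𝕜} (hΔ : 0 < Δ)
    (hg : ∀ i ∈ s, ∀ j ∈ t, Δ ≤ |g i j|) :
    |∑ i ∈ s, ∑ j ∈ t, a i * b j / g i j| ≤ (∑ i ∈ s, |a i|) * (∑ j ∈ t, |b j|) / Δ := by
  rw [sum_mul_sum, sum_div]
  refine (abs_sum_le_sum_abs _ _).trans (sum_le_sum fun i hi => ?_)
  rw [sum_div]
  refine (abs_sum_le_sum_abs _ _).trans (sum_le_sum fun j hj => ?_)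
  rw [abs_div, abs_mul]
  gcongr
  exact hg i hi j hj

lemma abs_sum_sum_mul_le {ι κ R : Type*} [Ring R] [LinearOrder R] [IsOrderedRing R]
    {s : Finset ι} {t : Finset κ} (w : ι → κ → R) {f : ι → κ → R} {M : R}
    (hf : ∀ i ∈ s, ∀ j ∈ t, |f i j| ≤ M) :
    |∑ i ∈ s, ∑ j ∈ t, w i j * f i j| ≤ (∑ i ∈ s, ∑ j ∈ t, |w i j|) * M := by
  rw [sum_mul]
  refine (abs_sum_le_sum_abs _ _).trans (sum_le_sum fun i hi => ?_)
  rw [sum_mul]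
  refine (abs_sum_le_sum_abs _ _).trans (sum_le_sum fun j hj => ?_)
  rw [abs_mul]
  gcongr
  exact hf i hi j hj

lemma sum_bilin_div_mul_eq_sum_entry_mul {V K F : Type*} [Fintype V] [Semifield F]
    (E : Matrix V V F) (ψ : K → V → F) (g : K → K → F) (s t : Finset K) (x : V) :
    ∑ k ∈ s, ∑ j ∈ t, (∑ y, ∑ z, ψ j y * E y z * ψ k z) / g k j * ψ k x * ψ j x =
      ∑ y, ∑ z, E y z * ∑ k ∈ s, ∑ j ∈ t, ψ k z * ψ k x * (ψ j y * ψ j x) / g k j := by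
  simp only [sum_div, sum_mul, mul_sum]
  rw [sum_comm_cycle]
  refine sum_congr rfl fun y _ => ?_
  rw [sum_comm_cycle]
  refine sum_congr rfl fun z _ => sum_congr rfl fun k _ => sum_congr rfl fun j _ => ?_
  ring

lemma sum_entries_le_two_mul_sum_cross {V R : Type*} [Fintype V]
    [Semiring R] [PartialOrder R] [IsOrderedAddMonoid R] {E : Matrix V V R} (hE : E.IsSymm)
    (hnonneg : ∀ x y, 0 ≤ E x y) {B C : Finset V}
    (hcross : ∀ x y, ¬((x ∈ B ∧ y ∈ C) ∨ (x ∈ C ∧ y ∈ B)) → E x y = 0) :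
    ∑ y, ∑ z, E y z ≤ 2 * ∑ y ∈ B, ∑ z ∈ C, E y z := by
  classical
  have hentry (y z : V) : E y z ≤
      (if y ∈ B then if z ∈ C then E y z else 0 else 0) +
        if z ∈ B then if y ∈ C then E z y else 0 else 0 := by
    rw [hE.apply y z]
    specialize hcross y z
    split_ifs <;> simp_all [le_add_of_nonneg_right]
  calc ∑ y, ∑ z, E y z
      ≤ ∑ y, ∑ z, ((if y ∈ B then if z ∈ C then E y z else 0 else 0) +
          if z ∈ B then if y ∈ C then E z y else 0 else 0) :=
        sum_le_sum fun y _ => sum_le_sum fun z _ => hentry y z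
    _ = ∑ y ∈ B, ∑ z ∈ C, E y z + ∑ y ∈ B, ∑ z ∈ C, E y z := by
        simp only [sum_add_distrib]
        congr 1
        · simp [sum_ite_mem]
        · rw [sum_comm]
          simp [sum_ite_mem]
    _ = 2 * ∑ y ∈ B, ∑ z ∈ C, E y z := (two_mul _).symm

theorem embedding_norm_cross_term_bound_general {V K : Type*} [Fintype V] [DecidableEq K]
    {E : Matrix V V ℝ} {W : ℝ} (hE : ∑ y, ∑ z, |E y z| ≤ W)
    {d : V → ℝ} {d0low : ℝ} (hd0pos : 0 < d0low) (hdlow : ∀ x, d0low ≤ d x)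
    {ψ : K → V → ℝ} (horth : ∀ k l, ∑ x, ψ k x * d x * ψ l x = if k = l then 1 else 0)
    {lam : K → ℝ} {I J : Finset K} {Δ : ℝ} (hΔ : 0 < Δ)
    (hgap : ∀ k ∈ I, ∀ j ∈ J, Δ ≤ |lam k - lam j|)
    {Sbar : ℝ} (hSbar : ∀ y, ∑ k ∈ I, ψ k y ^ 2 ≤ Sbar) (x : V) :
    |2 * ∑ k ∈ I, ∑ j ∈ J,
        ((∑ y, ∑ z, ψ j y * E y z * ψ k z) / (lam k - lam j)) * ψ k x * ψ j x|
      ≤ (2 / Δ) * Sbar * (W / d0low) := by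
  have hSbar_nonneg : 0 ≤ Sbar := (sum_nonneg fun k _ => sq_nonneg (ψ k x)).trans (hSbar x)
  have hJ (y : V) : ∑ j ∈ J, ψ j y ^ 2 ≤ 1 / d0low := by
    rw [le_div_iff₀' hd0pos]
    exact (mul_le_mul_of_nonneg_right (hdlow y) (sum_nonneg fun j _ => sq_nonneg _)).trans
      (weight_mul_sum_sq_le_one_of_orthonormal (fun x => hd0pos.le.trans (hdlow x)) horth J y)
  have hkernel (y z : V) :
      |∑ k ∈ I, ∑ j ∈ J, ψ k z * ψ k x * (ψ j y * ψ j x) / (lam k - lam j)|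
        ≤ Sbar * (1 / d0low) / Δ := by
    refine (abs_sum_sum_mul_div_le _ _ hΔ hgap).trans ?_
    gcongr
    · exact sum_abs_mul_le_of_sum_sq_le (hSbar z) (hSbar x)
    · exact sum_abs_mul_le_of_sum_sq_le (hJ y) (hJ x)
  rw [sum_bilin_div_mul_eq_sum_entry_mul E ψ (fun k j => lam k - lam j), abs_mul, abs_two]
  calc 2 * |∑ y, ∑ z, E y z *
          ∑ k ∈ I, ∑ j ∈ J, ψ k z * ψ k x * (ψ j y * ψ j x) / (lam k - lam j)|
      ≤ 2 * ((∑ y, ∑ z, |E y z|) * (Sbar * (1 / d0low) / Δ)) := by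
        gcongr
        exact abs_sum_sum_mul_le E fun y _ z _ => hkernel y z
    _ ≤ 2 * (W * (Sbar * (1 / d0low) / Δ)) := by gcongr
    _ = (2 / Δ) * Sbar * (W / d0low) := by ring

/-- Bound on the cross (`I` vs `Iᶜ`) term of the evolution of the spectral
embedding norm: with a complete `D`-orthonormal family `ψ_k` (`d(x) ≥ d0low > 0`), real
numbers `λ_k` with `|λ_k − λ_j| ≥ Δ > 0` for `k ∈ I`, `j ∉ I`, `S(y) = ∑_{k∈I} ψ_k(y)²`
and `S̄ = max_y S(y)`,
`|2∑_{k∈I,j∉I} (ψ_jᵀEψ_k/(λ_k−λ_j)) ψ_k(x)ψ_j(x)| ≤ (2/Δ)·S̄·(2 C_conn/d0low)`. -/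
theorem embedding_norm_cross_term_bound
    {V : Type*} [Fintype V] [DecidableEq V] [Nonempty V]
    (B C : Finset V) (hdisj : Disjoint B C) (hunion : B ∪ C = Finset.univ)
    (hBne : B.Nonempty) (hCne : C.Nonempty)
    (E : Matrix V V ℝ) (hEsymm : E.IsSymm) (hEnonneg : ∀ x y, 0 ≤ E x y)
    (hEcross : ∀ x y, ¬((x ∈ B ∧ y ∈ C) ∨ (x ∈ C ∧ y ∈ B)) → E x y = 0)
    (Cconn : ℝ) (hCconn : Cconn = ∑ y ∈ B, ∑ z ∈ C, E y z)
    (d : V → ℝ) (d0low : ℝ) (hd0pos : 0 < d0low) (hdlow : ∀ x, d0low ≤ d x)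
    -- complete D-orthonormal family (a square matrix of columns, indexed by k : V)
    (ψ : V → V → ℝ)
    (horth : ∀ k l, ∑ x, ψ k x * d x * ψ l x = if k = l then 1 else 0)
    (lam : V → ℝ)
    (I : Finset V)
    (Δ : ℝ) (hΔ : 0 < Δ)
    (hgap : ∀ k ∈ I, ∀ j ∉ I, Δ ≤ |lam k - lam j|)
    (Sbar : ℝ)
    (hSbar : Sbar = Finset.univ.sup' Finset.univ_nonempty (fun y => ∑ k ∈ I, (ψ k y) ^ 2)) :
    ∀ x, |2 * ∑ k ∈ I, ∑ j ∈ Iᶜ,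
        ((∑ y, ∑ z, ψ j y * E y z * ψ k z) / (lam k - lam j)) * ψ k x * ψ j x|
      ≤ (2 / Δ) * Sbar * (2 * Cconn / d0low) := by
  have hE : ∑ y, ∑ z, |E y z| ≤ 2 * Cconn := by
    simpa only [abs_of_nonneg (hEnonneg _ _), hCconn] using
      sum_entries_le_two_mul_sum_cross hEsymm hEnonneg hEcross
  exact embedding_norm_cross_term_bound_general hE hd0pos hdlow horth hΔ
    (fun k hk j hj => hgap k hk j (mem_compl.mp hj))
    fun y => hSbar ▸ le_sup' (fun y => ∑ k ∈ I, ψ k y ^ 2) (mem_univ y)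
end

section
/- (Initial separation for unequal cluster sizes) Suppose the K clusters C_1,…,C_K composing C have sizes |C_j| = δ_j n with Σ_j δ_j = δ, and that Assumption A1 holds at t=0: I contains exactly K eigenvectors supported on C, each associated with a unique cluster C_j and satisfying (1−ε1)/ν(C_j,0) ≤ ψ(x)² ≤ (1+ε1)/ν(C_j,0) for x∈C_j and ψ(x)² ≤ ε1/ν(C,0) for x∈C∖C_j (0 ≤ ε1 < 1), and |I|−K eigenvectors supported on B satisfying ψ(x)² ≤ (1+ε2)/ν(B,0) for x∈B (ε2 ≥ 0). Then for every x∈C_j, (1−ε1)/(n·d0_up·δ_j) ≤ S(x,0) ≤ (1/(n·d0_low))·(ε1/(δ/K) + (1+ε1)/δ_j), and for every x∈B, S(x,0) ≤ (1+ε2)(|I|−K)/(n·d0_low·(1−δ)). -/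
open Finset

/-! At a cluster vertex only the `K` cluster eigenvectors contribute to `S`: the one attached to the
cluster of the vertex gives the main term, and the other `K - 1` give at most `ε₁ / ν(C)` each. At a
background vertex only the `|I| - K` background eigenvectors contribute, at most `(1 + ε₂) / ν(B)`
each. Degree bounds turn the volumes `ν` into cardinalities. -/

section Volume

variable {V : Type*}

/-- The volume `ν(A) = ∑ x ∈ A, d x` of a set of vertices `A` with respect to the degrees `d`, by
which the sizes of eigenvectors are normalized. -/
def weightedVolume (d : V → ℝ) (A : Finset V) : ℝ :=
  ∑ x ∈ A, d x

variable {d : V → ℝ} {A : Finset V} {m M c : ℝ}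

lemma weightedVolume_pos (hA : A.Nonempty) (hd : ∀ x ∈ A, 0 < d x) : 0 < weightedVolume d A :=
  sum_pos hd hA

lemma card_mul_le_weightedVolume (hd : ∀ x ∈ A, m ≤ d x) : #A * m ≤ weightedVolume d A := by
  simpa only [weightedVolume, nsmul_eq_mul] using A.card_nsmul_le_sum d m hd

lemma weightedVolume_le_card_mul (hd : ∀ x ∈ A, d x ≤ M) : weightedVolume d A ≤ #A * M := by
  simpa only [weightedVolume, nsmul_eq_mul] using A.sum_le_card_nsmul d M hd

lemma div_weightedVolume_le_div_card_mul (hA : A.Nonempty) (hm : 0 < m)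
    (hd : ∀ x ∈ A, m ≤ d x) (hc : 0 ≤ c) : c / weightedVolume d A ≤ c / (#A * m) :=
  div_le_div_of_nonneg_left hc (mul_pos (Nat.cast_pos.mpr hA.card_pos) hm)
    (card_mul_le_weightedVolume hd)

lemma div_card_mul_le_div_weightedVolume (hA : A.Nonempty) (hpos : ∀ x ∈ A, 0 < d x)
    (hd : ∀ x ∈ A, d x ≤ M) (hc : 0 ≤ c) : c / (#A * M) ≤ c / weightedVolume d A :=
  div_le_div_of_nonneg_left hc (weightedVolume_pos hA hpos) (weightedVolume_le_card_mul hd)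

end Volume

section EmbeddingNorm

variable {ι V : Type*} {ψ : ι → V → ℝ} {I J : Finset ι} {x : V} {k : ι} {a b : ℝ}

/-- The spectral embedding norm `S(x) = ∑ k ∈ I, ψ k x ^ 2` of a vertex `x`. It is the squared
norm of the image of `x` under the embedding `x ↦ (ψ k x)_{k ∈ I}`, defined here for an arbitrary
family of functions `ψ`. -/
def spectralEmbeddingNorm (ψ : ι → V → ℝ) (I : Finset ι) (x : V) : ℝ :=
  ∑ k ∈ I, ψ k x ^ 2

lemma sq_le_spectralEmbeddingNorm (hk : k ∈ I) : ψ k x ^ 2 ≤ spectralEmbeddingNorm ψ I x :=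
  single_le_sum (f := fun i => ψ i x ^ 2) (fun _ _ => sq_nonneg _) hk

lemma spectralEmbeddingNorm_eq_of_subset (hJI : J ⊆ I) (h : ∀ k ∈ I, k ∉ J → ψ k x = 0) :
    spectralEmbeddingNorm ψ I x = spectralEmbeddingNorm ψ J x :=
  (sum_subset hJI fun k hk hkJ => by rw [h k hk hkJ, zero_pow two_ne_zero]).symm

lemma spectralEmbeddingNorm_le_card_mul (h : ∀ k ∈ I, ψ k x ^ 2 ≤ a) :
    spectralEmbeddingNorm ψ I x ≤ #I * a := by
  simpa only [spectralEmbeddingNorm, nsmul_eq_mul] using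
    I.sum_le_card_nsmul (fun k => ψ k x ^ 2) a h

lemma spectralEmbeddingNorm_le_add_card_sub_one_mul
    (hk : k ∈ I) (ha : ψ k x ^ 2 ≤ a) (hb : ∀ i ∈ I, i ≠ k → ψ i x ^ 2 ≤ b) :
    spectralEmbeddingNorm ψ I x ≤ a + (#I - 1) * b := by
  classical
  have hsplit : spectralEmbeddingNorm ψ I x
      = ψ k x ^ 2 + spectralEmbeddingNorm ψ (I.erase k) x :=
    (add_sum_erase I (fun i => ψ i x ^ 2) hk).symm
  have hrest : spectralEmbeddingNorm ψ (I.erase k) x ≤ #(I.erase k) * b :=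
    spectralEmbeddingNorm_le_card_mul fun i hi => hb i (mem_of_mem_erase hi) (ne_of_mem_erase hi)
  rw [cast_card_erase_of_mem hk] at hrest
  linarith

end EmbeddingNorm

/-- Assumption A1 for a family `ψ`, an index set `I`, and clusters `Cl j`: the map `σ` picks out
the function attached to each cluster, and the members of `I` outside its range are those
supported on the background `B`. Here `ψ` is an arbitrary family of functions and `Cl` an arbitrary
family of sets. -/
structure AssumptionA1 {ι κ V : Type*} (d : V → ℝ) (B C : Finset V) (Cl : κ → Finset V)
    (ψ : ι → V → ℝ) (I : Finset ι) (σ : κ → ι) (ε₁ ε₂ : ℝ) : Prop where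
  injective : Function.Injective σ
  mem : ∀ j, σ j ∈ I
  cluster_eq_zero : ∀ j, ∀ x ∈ B, ψ (σ j) x = 0
  background_eq_zero : ∀ k ∈ I, k ∉ Set.range σ → ∀ x ∈ C, ψ k x = 0
  le_cluster_sq : ∀ j, ∀ x ∈ Cl j, (1 - ε₁) / weightedVolume d (Cl j) ≤ ψ (σ j) x ^ 2
  cluster_sq_le : ∀ j, ∀ x ∈ Cl j, ψ (σ j) x ^ 2 ≤ (1 + ε₁) / weightedVolume d (Cl j)
  cluster_sq_le_of_notMem : ∀ j, ∀ x ∈ C, x ∉ Cl j → ψ (σ j) x ^ 2 ≤ ε₁ / weightedVolume d C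
  background_sq_le : ∀ k ∈ I, k ∉ Set.range σ → ∀ x ∈ B,
    ψ k x ^ 2 ≤ (1 + ε₂) / weightedVolume d B

namespace AssumptionA1

variable {ι κ V : Type*} {d : V → ℝ} {B C : Finset V} {Cl : κ → Finset V} {ψ : ι → V → ℝ}
  {I : Finset ι} {σ : κ → ι} {ε₁ ε₂ m M : ℝ} {x : V} {j : κ}

lemma le_spectralEmbeddingNorm (h : AssumptionA1 d B C Cl ψ I σ ε₁ ε₂) (hx : x ∈ Cl j) :
    (1 - ε₁) / weightedVolume d (Cl j) ≤ spectralEmbeddingNorm ψ I x :=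
  (h.le_cluster_sq j x hx).trans (sq_le_spectralEmbeddingNorm (h.mem j))

lemma div_card_mul_le_spectralEmbeddingNorm (h : AssumptionA1 d B C Cl ψ I σ ε₁ ε₂)
    (hpos : ∀ y ∈ Cl j, 0 < d y) (hM : ∀ y ∈ Cl j, d y ≤ M) (hε₁ : ε₁ ≤ 1) (hx : x ∈ Cl j) :
    (1 - ε₁) / (#(Cl j) * M) ≤ spectralEmbeddingNorm ψ I x :=
  (div_card_mul_le_div_weightedVolume ⟨x, hx⟩ hpos hM (sub_nonneg.mpr hε₁)).trans
    (h.le_spectralEmbeddingNorm hx)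

variable [Fintype κ]

lemma map_univ_subset (h : AssumptionA1 d B C Cl ψ I σ ε₁ ε₂) :
    univ.map ⟨σ, h.injective⟩ ⊆ I := by
  intro k hk
  obtain ⟨j, -, rfl⟩ := mem_map.mp hk
  exact h.mem j

lemma fintype_card_le_card (h : AssumptionA1 d B C Cl ψ I σ ε₁ ε₂) : Fintype.card κ ≤ #I := by
  simpa only [card_map, card_univ] using card_le_card h.map_univ_subset

lemma spectralEmbeddingNorm_le_of_mem_cluster (h : AssumptionA1 d B C Cl ψ I σ ε₁ ε₂)
    (hsub : Cl j ⊆ C) (hdisj : ∀ i, i ≠ j → Disjoint (Cl i) (Cl j)) (hx : x ∈ Cl j) :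
    spectralEmbeddingNorm ψ I x
      ≤ (1 + ε₁) / weightedVolume d (Cl j)
        + (Fintype.card κ - 1) * (ε₁ / weightedVolume d C) := by
  classical
  have hoff : ∀ k ∈ univ.map ⟨σ, h.injective⟩, k ≠ σ j → ψ k x ^ 2 ≤ ε₁ / weightedVolume d C := by
    intro k hk hkj
    obtain ⟨i, -, rfl⟩ := mem_map.mp hk
    have hxi : x ∉ Cl i := disjoint_right.mp (hdisj i (ne_of_apply_ne σ hkj)) hx
    exact h.cluster_sq_le_of_notMem i x (hsub hx) hxi
  have hbound := spectralEmbeddingNorm_le_add_card_sub_one_mul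
    (mem_map_of_mem _ (mem_univ j)) (h.cluster_sq_le j x hx) hoff
  rw [card_map, card_univ] at hbound
  rwa [spectralEmbeddingNorm_eq_of_subset h.map_univ_subset fun k hk hkσ =>
    h.background_eq_zero k hk (by simpa using hkσ) x (hsub hx)]

lemma spectralEmbeddingNorm_le_of_mem_background (h : AssumptionA1 d B C Cl ψ I σ ε₁ ε₂)
    (hx : x ∈ B) :
    spectralEmbeddingNorm ψ I x
      ≤ (#I - Fintype.card κ) * ((1 + ε₂) / weightedVolume d B) := by
  classical
  set J := univ.map ⟨σ, h.injective⟩ with hJ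
  have hbound : spectralEmbeddingNorm ψ (I \ J) x ≤ #(I \ J) * ((1 + ε₂) / weightedVolume d B) :=
    spectralEmbeddingNorm_le_card_mul fun k hk =>
      h.background_sq_le k (mem_sdiff.mp hk).1 (by simpa [hJ] using (mem_sdiff.mp hk).2) x hx
  rw [cast_card_sdiff h.map_univ_subset, card_map, card_univ] at hbound
  have hzero : ∀ k ∈ I, k ∉ I \ J → ψ k x = 0 := by
    intro k hk hkIJ
    have hkJ : k ∈ J := by_contra fun hkJ => hkIJ (mem_sdiff.mpr ⟨hk, hkJ⟩)
    obtain ⟨j, -, rfl⟩ := mem_map.mp hkJ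
    exact h.cluster_eq_zero j x hx
  rwa [spectralEmbeddingNorm_eq_of_subset sdiff_subset hzero]

lemma spectralEmbeddingNorm_le_div_card_mul_of_mem_cluster
    (h : AssumptionA1 d B C Cl ψ I σ ε₁ ε₂) (hsub : Cl j ⊆ C)
    (hdisj : ∀ i, i ≠ j → Disjoint (Cl i) (Cl j)) (hm : 0 < m) (hd : ∀ y ∈ C, m ≤ d y)
    (hε₁ : 0 ≤ ε₁) (hx : x ∈ Cl j) :
    spectralEmbeddingNorm ψ I x
      ≤ (1 + ε₁) / (#(Cl j) * m) + Fintype.card κ * (ε₁ / (#C * m)) := by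
  have hC : C.Nonempty := ⟨x, hsub hx⟩
  have hmain : (1 + ε₁) / weightedVolume d (Cl j) ≤ (1 + ε₁) / (#(Cl j) * m) :=
    div_weightedVolume_le_div_card_mul ⟨x, hx⟩ hm (fun y hy => hd y (hsub hy)) (by positivity)
  have hrest : ε₁ / weightedVolume d C ≤ ε₁ / (#C * m) :=
    div_weightedVolume_le_div_card_mul hC hm hd hε₁
  have hvol : 0 < weightedVolume d C := weightedVolume_pos hC fun y hy => hm.trans_le (hd y hy)
  calc spectralEmbeddingNorm ψ I x
      ≤ (1 + ε₁) / weightedVolume d (Cl j)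
          + (Fintype.card κ - 1) * (ε₁ / weightedVolume d C) :=
        h.spectralEmbeddingNorm_le_of_mem_cluster hsub hdisj hx
    _ ≤ (1 + ε₁) / (#(Cl j) * m) + Fintype.card κ * (ε₁ / (#C * m)) := by
        gcongr
        exact sub_le_self _ zero_le_one

lemma spectralEmbeddingNorm_le_div_card_mul_of_mem_background
    (h : AssumptionA1 d B C Cl ψ I σ ε₁ ε₂) (hm : 0 < m) (hd : ∀ y ∈ B, m ≤ d y)
    (hε₂ : 0 ≤ 1 + ε₂) (hx : x ∈ B) :
    spectralEmbeddingNorm ψ I x ≤ (#I - Fintype.card κ) * ((1 + ε₂) / (#B * m)) :=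
  (h.spectralEmbeddingNorm_le_of_mem_background hx).trans <|
    mul_le_mul_of_nonneg_left (div_weightedVolume_le_div_card_mul ⟨x, hx⟩ hm hd hε₂)
      (sub_nonneg.mpr (Nat.cast_le.mpr h.fintype_card_le_card))

end AssumptionA1

theorem embedding_norm_initial_bounds_unequal_clusters_general
    {ι κ V : Type*} [Fintype κ] [Fintype V] {B C : Finset V} (hBC : IsCompl B C)
    {Cl : κ → Finset V} (hClsub : ∀ j, Cl j ⊆ C) (hCldisj : ∀ i j, i ≠ j → Disjoint (Cl i) (Cl j))
    {δ : ℝ} {δj : κ → ℝ} (hCcard : (#C : ℝ) = δ * Fintype.card V)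
    (hClcard : ∀ j, (#(Cl j) : ℝ) = δj j * Fintype.card V)
    {d : V → ℝ} {m M : ℝ} (hm : 0 < m) (hmd : ∀ x, m ≤ d x) (hdM : ∀ x, d x ≤ M)
    {ψ : ι → V → ℝ} {I : Finset ι} {σ : κ → ι} {ε₁ ε₂ : ℝ} (hε₁ : 0 ≤ ε₁) (hε₁' : ε₁ ≤ 1)
    (hε₂ : 0 ≤ 1 + ε₂) (hA1 : AssumptionA1 d B C Cl ψ I σ ε₁ ε₂) :
    (∀ j, ∀ x ∈ Cl j,
      (1 - ε₁) / (Fintype.card V * M * δj j) ≤ spectralEmbeddingNorm ψ I x ∧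
      spectralEmbeddingNorm ψ I x
        ≤ 1 / (Fintype.card V * m) * (ε₁ / (δ / Fintype.card κ) + (1 + ε₁) / δj j)) ∧
    ∀ x ∈ B, spectralEmbeddingNorm ψ I x
      ≤ (1 + ε₂) * (#I - Fintype.card κ) / (Fintype.card V * m * (1 - δ)) := by
  refine ⟨fun j x hx => ⟨?_, ?_⟩, fun x hx => ?_⟩
  · convert hA1.div_card_mul_le_spectralEmbeddingNorm (fun y _ => hm.trans_le (hmd y))
      (fun y _ => hdM y) hε₁' hx using 2
    rw [hClcard]
    ring
  · convert hA1.spectralEmbeddingNorm_le_div_card_mul_of_mem_cluster (hClsub j)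
      (fun i => hCldisj i j) hm (fun y _ => hmd y) hε₁ hx using 1
    rw [hClcard, hCcard, div_div_eq_mul_div]
    ring
  · have hBcard : (#B : ℝ) = (1 - δ) * Fintype.card V := by
      classical
      have hcard : (#C : ℝ) + #B = Fintype.card V := by
        rw [← hBC.symm.compl_eq]
        exact_mod_cast card_add_card_compl C
      linarith
    convert hA1.spectralEmbeddingNorm_le_div_card_mul_of_mem_background hm (fun y _ => hmd y) hε₂ hx
      using 1
    rw [hBcard]
    ring

/-- Initial separation for unequal cluster sizes: with clusters
`C_1,…,C_K` of sizes `δ_j n` (`∑_j δ_j = δ`) and Assumption A1 at `t = 0`, the spectral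
embedding norm `S(x,0) = ∑_{k∈I} ψ_k(x)²` satisfies, for `x ∈ C_j`,
`(1−ε1)/(n·d0up·δ_j) ≤ S(x,0) ≤ (1/(n·d0low))(ε1/(δ/K) + (1+ε1)/δ_j)`, and for `x ∈ B`,
`S(x,0) ≤ (1+ε2)(|I|−K)/(n·d0low·(1−δ))`. -/
theorem embedding_norm_initial_bounds_unequal_clusters
    {V : Type*} [Fintype V] [DecidableEq V] [Nonempty V]
    (B C : Finset V) (hdisj : Disjoint B C) (hunion : B ∪ C = Finset.univ)
    (hBne : B.Nonempty) (hCne : C.Nonempty)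
    (K : ℕ) (hK : 0 < K) (Cl : Fin K → Finset V)
    (hClsub : ∀ j, Cl j ⊆ C)
    (hCldisj : ∀ j j', j ≠ j' → Disjoint (Cl j) (Cl j'))
    (hClcover : ∀ x ∈ C, ∃ j, x ∈ Cl j)
    (δ : ℝ) (hδ0 : 0 < δ) (hδ1 : δ < 1)
    (δj : Fin K → ℝ) (hδj : ∀ j, 0 < δj j)
    (hCcard : (C.card : ℝ) = δ * Fintype.card V)
    (hClcard : ∀ j, ((Cl j).card : ℝ) = δj j * Fintype.card V)
    (hδsum : ∑ j, δj j = δ)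
    (W0 : Matrix V V ℝ) (hW0symm : W0.IsSymm)
    (hW0nonneg : ∀ x y, 0 ≤ W0 x y)
    (hW0cross : ∀ x y, ((x ∈ B ∧ y ∈ C) ∨ (x ∈ C ∧ y ∈ B)) → W0 x y = 0)
    (d : V → ℝ) (hd : ∀ x, d x = ∑ y, W0 x y)
    (d0low d0up : ℝ)
    (hd0low : d0low = Finset.univ.inf' Finset.univ_nonempty d)
    (hd0up : d0up = Finset.univ.sup' Finset.univ_nonempty d)
    (hd0pos : 0 < d0low)
    -- eigendata of P(0) = D(0)⁻¹ W0, indexed by k : V, D(0)-orthonormal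
    (lam : V → ℝ) (ψ : V → V → ℝ)
    (heig : ∀ k x, ∑ y, W0 x y * ψ k y = lam k * (d x * ψ k x))
    (horth : ∀ k l, ∑ x, ψ k x * d x * ψ l x = if k = l then 1 else 0)
    (I : Finset V)
    (ε1 ε2 : ℝ) (hε1 : 0 ≤ ε1) (hε1' : ε1 < 1) (hε2 : 0 ≤ ε2)
    -- Assumption A1: K eigenvectors in I supported on C, one per cluster
    (σ : Fin K → V) (hσinj : Function.Injective σ)
    (hσI : ∀ j, σ j ∈ I)
    (hCsupp : ∀ j, ∀ x ∈ B, ψ (σ j) x = 0)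
    (hBsupp : ∀ k ∈ I, k ∉ Finset.univ.image σ → ∀ x ∈ C, ψ k x = 0)
    (hlow : ∀ j, ∀ x ∈ Cl j, (1 - ε1) / (∑ y ∈ Cl j, d y) ≤ (ψ (σ j) x) ^ 2)
    (hup : ∀ j, ∀ x ∈ Cl j, (ψ (σ j) x) ^ 2 ≤ (1 + ε1) / (∑ y ∈ Cl j, d y))
    (hoff : ∀ j, ∀ x ∈ C, x ∉ Cl j → (ψ (σ j) x) ^ 2 ≤ ε1 / (∑ y ∈ C, d y))
    (hBbound : ∀ k ∈ I, k ∉ Finset.univ.image σ →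
      ∀ x ∈ B, (ψ k x) ^ 2 ≤ (1 + ε2) / (∑ y ∈ B, d y)) :
    (∀ j : Fin K, ∀ x ∈ Cl j,
      (1 - ε1) / (Fintype.card V * d0up * δj j) ≤ ∑ k ∈ I, (ψ k x) ^ 2 ∧
      ∑ k ∈ I, (ψ k x) ^ 2
        ≤ (1 / (Fintype.card V * d0low)) * (ε1 / (δ / K) + (1 + ε1) / δj j)) ∧
    (∀ x ∈ B,
      ∑ k ∈ I, (ψ k x) ^ 2
        ≤ (1 + ε2) * ((I.card : ℝ) - K) / (Fintype.card V * d0low * (1 - δ))) := by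
  have hBC : IsCompl B C := ⟨hdisj, codisjoint_iff.mpr hunion⟩
  have hlowd : ∀ x, d0low ≤ d x := fun x => hd0low ▸ inf'_le d (mem_univ x)
  have hupd : ∀ x, d x ≤ d0up := fun x => hd0up ▸ le_sup' d (mem_univ x)
  have hA1 : AssumptionA1 d B C Cl ψ I σ ε1 ε2 :=
    ⟨hσinj, hσI, hCsupp, fun k hk hkσ => hBsupp k hk (by simpa using hkσ), hlow, hup, hoff,
      fun k hk hkσ => hBbound k hk (by simpa using hkσ)⟩
  simpa only [spectralEmbeddingNorm, Fintype.card_fin] using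
    embedding_norm_initial_bounds_unequal_clusters_general hBC hClsub hCldisj hCcard hClcard
      hd0pos hlowd hupd hε1 hε1'.le (add_nonneg zero_le_one hε2) hA1
end
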